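/- arXiv:1101.1488 — 4 statements merged into one kernel-verified Lean document; each statement's English description precedes it below -/
import Mathlib

section
/- Szemerédi–Trotter Theorem (rich-lines form): There is an absolute constant C > 0 with the following property. Let S be a set of n points in the Euclidean plane ℝ², let 𝓛 be a finite set of lines in ℝ², and let k ≥ 2. Then the number of lines in 𝓛 that are each incident on at least k points of S is at most C · (n²/k³ + n/k). -/
open Set

noncomputable section

/-- The line through two points of the plane, as a set. -/
def lineThrough (p q : ℝ × ℝ) : Set (ℝ × ℝ) := (affineSpan ℝ {p, q} : AffineSubspace ℝ (ℝ × ℝ))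

/-- A subset of the plane is a line if it is the affine span of two distinct points. -/
def IsLine (L : Set (ℝ × ℝ)) : Prop := ∃ p q : ℝ × ℝ, p ≠ q ∧ L = lineThrough p q

/-- The richness of a line `L` with respect to a finite point set `S`:
the number of points of `S` incident on `L`. -/
def richness (S : Finset (ℝ × ℝ)) (L : Set (ℝ × ℝ)) : ℕ := ((S : Set (ℝ × ℝ)) ∩ L).ncard

/-- The lines induced by a finite point set `S`: lines passing through
at least two distinct points of `S`. -/
def InducedLines (S : Finset (ℝ × ℝ)) : Set (Set (ℝ × ℝ)) :=
  {L | IsLine L ∧ ∃ p ∈ S, ∃ q ∈ S, p ≠ q ∧ p ∈ L ∧ q ∈ L}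

/-- The bichromatic induced lines of a bichromatic point set `(P, Q)`:
lines incident on at least one point of `P` and at least one point of `Q`
(for disjoint `P`, `Q` such a line passes through two distinct points of `P ∪ Q`). -/
def BichromLines (P Q : Finset (ℝ × ℝ)) : Set (Set (ℝ × ℝ)) :=
  {L | IsLine L ∧ (∃ p ∈ P, p ∈ L) ∧ (∃ q ∈ Q, q ∈ L)}


namespace STproof

/-- slope of an edge -/
def slp {V : Type*} (x y : V → ℝ) (e : V × V) : ℝ := (y e.2 - y e.1) / (x e.2 - x e.1)

/-- height of the line supporting an edge -/
def hgt {V : Type*} (x y : V → ℝ) (e : V × V) (s : ℝ) : ℝ := y e.1 + slp x y e * (s - x e.1)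

/-- crossing of two edges -/
def Crs {V : Type*} (x y : V → ℝ) (e f : V × V) : Prop :=
  e ≠ f ∧ ∃ s, x e.1 < s ∧ s < x e.2 ∧ x f.1 < s ∧ s < x f.2 ∧ hgt x y e s = hgt x y f s

lemma hgt_left {V : Type*} (x y : V → ℝ) (e : V × V) : hgt x y e (x e.1) = y e.1 := by
  simp [hgt]

lemma hgt_right {V : Type*} (x y : V → ℝ) (e : V × V) (h : x e.1 < x e.2) :
    hgt x y e (x e.2) = y e.2 := by
  have : x e.2 - x e.1 ≠ 0 := by linarith
  simp only [hgt, slp]; field_simp; ring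

lemma hgt_cont {V : Type*} (x y : V → ℝ) (e : V × V) : Continuous (hgt x y e) := by
  unfold hgt; fun_prop

lemma exists_cross {V : Type*} (x y : V → ℝ) (e f : V × V) {a b : ℝ} (hab : a < b)
    (h1 : hgt x y e a < hgt x y f a) (h2 : hgt x y f b < hgt x y e b) :
    ∃ s, a < s ∧ s < b ∧ hgt x y e s = hgt x y f s := by
  have hc : ContinuousOn (fun s => hgt x y e s - hgt x y f s) (Set.Icc a b) :=
    ((hgt_cont x y e).sub (hgt_cont x y f)).continuousOn
  obtain ⟨s, hs, hs'⟩ := intermediate_value_Ioo hab.le hc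
    (show (0 : ℝ) ∈ _ from ⟨by simp; linarith, by simp; linarith⟩)
  exact ⟨s, hs.1, hs.2, by simpa [sub_eq_zero] using hs'⟩

section lin
variable {V : Type*} {x y : V → ℝ} {A : Finset V} {E : Finset (V × V)}

lemma same_slope (hx : Function.Injective x)
    (hlt : ∀ e ∈ E, x e.1 < x e.2)
    (hA : ∀ e ∈ E, e.1 ∈ A ∧ e.2 ∈ A)
    (hint : ∀ e ∈ E, ∀ w ∈ A, x e.1 < x w → x w < x e.2 → hgt x y e (x w) ≠ y w)
    {e f : V × V} (he : e ∈ E) (hf : f ∈ E) (h1 : e.1 = f.1) (hs : slp x y e = slp x y f) :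
    e = f := by
  have hh : ∀ s, hgt x y e s = hgt x y f s := by intro s; simp [hgt, h1, hs]
  rcases lt_trichotomy (x e.2) (x f.2) with h | h | h
  · exact absurd (by rw [← hh, hgt_right _ _ _ (hlt e he)])
      (hint f hf e.2 (hA e he).2 (by rw [← h1]; exact hlt e he) h)
  · exact Prod.ext h1 (hx h)
  · exact absurd (by rw [hh, hgt_right _ _ _ (hlt f hf)])
      (hint e he f.2 (hA f hf).2 (by rw [h1]; exact hlt f hf) h)

/-- successor edge in the fan of a vertex -/
def Nxt (x y : V → ℝ) (E : Finset (V × V)) (e e' : V × V) : Prop :=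
  e'.1 = e.1 ∧ slp x y e < slp x y e' ∧
    ∀ f ∈ E, f.1 = e.1 → slp x y e < slp x y f → slp x y e' ≤ slp x y f

lemma trace (hx : Function.Injective x)
    (hA : ∀ e ∈ E, e.1 ∈ A ∧ e.2 ∈ A)
    (hint : ∀ e ∈ E, ∀ w ∈ A, x e.1 < x w → x w < x e.2 → hgt x y e (x w) ≠ y w)
    (hnc : ∀ e ∈ E, ∀ f ∈ E, ¬ Crs x y e f)
    {e e' f : V × V} (he : e ∈ E) (he' : e' ∈ E) (hf : f ∈ E) (hn : Nxt x y E e e')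
    {s : ℝ} (hs0 : x e.1 < s) (hs1 : s ≤ x e.2) (hs2 : s ≤ x e'.2)
    (hf1 : x f.1 < s) (hf2 : s < x f.2)
    (h1 : hgt x y e s < hgt x y f s) (h2 : hgt x y f s < hgt x y e' s) :
    ∃ w ∈ A, x e.1 < x w ∧ x w < s ∧ hgt x y e (x w) ≤ y w ∧ y w ≤ hgt x y e' (x w) := by
  obtain ⟨hu, hsl, hmin⟩ := hn
  have hef : e ≠ f := by rintro rfl; exact lt_irrefl _ h1
  have hef' : f ≠ e' := by rintro rfl; exact lt_irrefl _ h2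
  have key1 : ∀ a, x e.1 ≤ a → x f.1 ≤ a → a < s → hgt x y e a ≤ hgt x y f a := by
    intro a h3 h4 h5
    by_contra! hc
    obtain ⟨t, ht1, ht2, ht3⟩ := exists_cross x y f e h5 hc h1
    exact hnc e he f hf ⟨hef, t, by linarith, by linarith, by linarith, by linarith, ht3.symm⟩
  have key2 : ∀ a, x e.1 ≤ a → x f.1 ≤ a → a < s → hgt x y f a ≤ hgt x y e' a := by
    intro a h3 h4 h5
    by_contra! hc
    obtain ⟨t, ht1, ht2, ht3⟩ := exists_cross x y e' f h5 hc h2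
    exact hnc f hf e' he' ⟨hef', t, by linarith, by linarith, by rw [hu]; linarith,
      by linarith, ht3.symm⟩
  rcases lt_trichotomy (x f.1) (x e.1) with h | h | h
  · have a1 := key1 _ le_rfl h.le hs0
    have a2 := key2 _ le_rfl h.le hs0
    rw [hgt_left] at a1
    rw [← hu, hgt_left, hu] at a2
    exact absurd (le_antisymm a2 a1) (hint f hf e.1 (hA e he).1 h (by linarith))
  · have h0 := hx h
    simp only [hgt, hu, h0] at h1 h2
    have hp : 0 < s - x e.1 := by linarith
    have b1 : slp x y e < slp x y f := by
      by_contra! hc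
      nlinarith
    have b2 : slp x y f < slp x y e' := by
      by_contra! hc
      nlinarith
    exact absurd (hmin f hf h0 b1) (not_le.2 b2)
  · refine ⟨f.1, (hA f hf).1, h, hf1, ?_, ?_⟩
    · have := key1 _ h.le le_rfl hf1
      rwa [hgt_left] at this
    · have := key2 _ h.le le_rfl hf1
      rwa [hgt_left] at this

/-- `e` is directly below `w` -/
def Bel (x y : V → ℝ) (E : Finset (V × V)) (e : V × V) (w : V) : Prop :=
  x e.1 < x w ∧ x w < x e.2 ∧ hgt x y e (x w) < y w ∧
    ∀ f ∈ E, x f.1 < x w → x w < x f.2 → hgt x y e (x w) < hgt x y f (x w) →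
      y w ≤ hgt x y f (x w)

/-- `e` is directly above `w` -/
def Abv (x y : V → ℝ) (E : Finset (V × V)) (e : V × V) (w : V) : Prop :=
  x e.1 < x w ∧ x w < x e.2 ∧ y w < hgt x y e (x w) ∧
    ∀ f ∈ E, x f.1 < x w → x w < x f.2 → hgt x y f (x w) < hgt x y e (x w) →
      hgt x y f (x w) ≤ y w

lemma Bel_uniq (hnc : ∀ e ∈ E, ∀ f ∈ E, ¬ Crs x y e f) {e f : V × V} (he : e ∈ E) (hf : f ∈ E)
    {w : V} (h1 : Bel x y E e w) (h2 : Bel x y E f w) : e = f := by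
  by_contra hne
  rcases lt_trichotomy (hgt x y e (x w)) (hgt x y f (x w)) with h | h | h
  · exact absurd (h1.2.2.2 f hf h2.1 h2.2.1 h) (not_le.2 h2.2.2.1)
  · exact hnc e he f hf ⟨hne, x w, h1.1, h1.2.1, h2.1, h2.2.1, h⟩
  · exact absurd (h2.2.2.2 e he h1.1 h1.2.1 h) (not_le.2 h1.2.2.1)

lemma Abv_uniq (hnc : ∀ e ∈ E, ∀ f ∈ E, ¬ Crs x y e f) {e f : V × V} (he : e ∈ E) (hf : f ∈ E)
    {w : V} (h1 : Abv x y E e w) (h2 : Abv x y E f w) : e = f := by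
  by_contra hne
  rcases lt_trichotomy (hgt x y e (x w)) (hgt x y f (x w)) with h | h | h
  · exact absurd (h2.2.2.2 e he h1.1 h1.2.1 h) (not_le.2 h1.2.2.1)
  · exact hnc e he f hf ⟨hne, x w, h1.1, h1.2.1, h2.1, h2.2.1, h⟩
  · exact absurd (h1.2.2.2 f hf h2.1 h2.2.1 h) (not_le.2 h2.2.2.1)

lemma dichotomy (hx : Function.Injective x)
    (hlt : ∀ e ∈ E, x e.1 < x e.2)
    (hA : ∀ e ∈ E, e.1 ∈ A ∧ e.2 ∈ A)
    (hint : ∀ e ∈ E, ∀ w ∈ A, x e.1 < x w → x w < x e.2 → hgt x y e (x w) ≠ y w)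
    (hnc : ∀ e ∈ E, ∀ f ∈ E, ¬ Crs x y e f)
    {e e' : V × V} (he : e ∈ E) (he' : e' ∈ E) (hn : Nxt x y E e e') :
    ∃ w ∈ A, Bel x y E e w ∨ Abv x y E e' w := by
  classical
  have hu := hn.1
  have hord : ∀ s, x e.1 < s → hgt x y e s < hgt x y e' s := by
    intro s hs
    have := hn.2.1
    simp only [hgt, hu]
    nlinarith
  let W := A.filter fun w => x e.1 < x w ∧ x w ≤ x e.2 ∧ x w ≤ x e'.2 ∧
    hgt x y e (x w) ≤ y w ∧ y w ≤ hgt x y e' (x w)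
  have l1 := hlt e he
  have l2 := hlt e' he'
  have hW : W.Nonempty := by
    rcases le_total (x e.2) (x e'.2) with h | h
    · refine ⟨e.2, Finset.mem_filter.2 ⟨(hA e he).2, l1, le_rfl, h, ?_, ?_⟩⟩
      · rw [hgt_right _ _ _ l1]
      · rw [← hgt_right x y e l1]; exact (hord _ l1).le
    · rw [hu] at l2
      refine ⟨e'.2, Finset.mem_filter.2 ⟨(hA e' he').2, l2, h, le_rfl, ?_, ?_⟩⟩
      · rw [← hgt_right x y e' (by rw [hu]; exact l2)]; exact (hord _ l2).le
      · rw [hgt_right _ _ _ (by rw [hu]; exact l2)]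
  obtain ⟨w, hwW, hwmin⟩ := Finset.exists_min_image W x hW
  obtain ⟨hwA, w1, w2, w3, w4, w5⟩ := Finset.mem_filter.1 hwW
  have noc : ∀ f ∈ E, x f.1 < x w → x w < x f.2 → hgt x y e (x w) < hgt x y f (x w) →
      hgt x y f (x w) < hgt x y e' (x w) → False := by
    intro f hf f1 f2 f3 f4
    obtain ⟨a, haA, a1, a2, a3, a4⟩ := trace hx hA hint hnc he he' hf hn w1 w2 w3 f1 f2 f3 f4
    have := hwmin a (Finset.mem_filter.2 ⟨haA, a1, by linarith, by linarith, a3, a4⟩)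
    linarith
  refine ⟨w, hwA, ?_⟩
  rcases lt_or_eq_of_le w2 with h | h
  · left
    refine ⟨w1, h, lt_of_le_of_ne w4 (hint e he w hwA w1 h), ?_⟩
    intro f hf f1 f2 f3
    by_contra! hc
    exact noc f hf f1 f2 f3 (by linarith)
  · right
    have hwe : w = e.2 := hx h
    have hyw : y w = hgt x y e (x w) := by rw [hwe, hgt_right _ _ _ l1]
    have hlt' : x w < x e'.2 := by
      refine lt_of_le_of_ne w3 fun hc => ?_
      have : w = e'.2 := hx hc
      have h3 := hgt_right x y e' l2
      rw [← this, hyw] at h3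
      exact absurd h3 (hord _ w1).ne'
    refine ⟨by rw [hu]; exact w1, hlt', by rw [hyw]; exact hord _ w1, ?_⟩
    intro f hf f1 f2 f3
    by_contra! hc
    exact noc f hf f1 f2 (by rw [← hyw]; exact hc) f3

lemma linear_bound (hx : Function.Injective x)
    (hlt : ∀ e ∈ E, x e.1 < x e.2)
    (hA : ∀ e ∈ E, e.1 ∈ A ∧ e.2 ∈ A)
    (hint : ∀ e ∈ E, ∀ w ∈ A, x e.1 < x w → x w < x e.2 → hgt x y e (x w) ≠ y w)
    (hnc : ∀ e ∈ E, ∀ f ∈ E, ¬ Crs x y e f) :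
    E.card ≤ 3 * A.card := by
  classical
  let E1 := E.filter fun e => ∀ f ∈ E, f.1 = e.1 → slp x y f ≤ slp x y e
  let E2 := E.filter fun e => ∃ w ∈ A, Bel x y E e w
  let E3 := E.filter fun e => ∃ w ∈ A, ∃ e' ∈ E, Nxt x y E e e' ∧ Abv x y E e' w
  have hc : E ⊆ E1 ∪ E2 ∪ E3 := by
    intro e he
    by_cases h1 : ∀ f ∈ E, f.1 = e.1 → slp x y f ≤ slp x y e
    · exact Finset.mem_union_left _ (Finset.mem_union_left _ (Finset.mem_filter.2 ⟨he, h1⟩))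
    · push Not at h1
      obtain ⟨f, hf, hfe, hfs⟩ := h1
      obtain ⟨e', he', hmin⟩ := Finset.exists_min_image
        (E.filter fun f => f.1 = e.1 ∧ slp x y e < slp x y f) (slp x y)
        ⟨f, Finset.mem_filter.2 ⟨hf, hfe, hfs⟩⟩
      obtain ⟨he'E, hu, hs⟩ := Finset.mem_filter.1 he'
      have hn : Nxt x y E e e' := ⟨hu, hs, fun g hg hg1 hg2 =>
        hmin g (Finset.mem_filter.2 ⟨hg, hg1, hg2⟩)⟩
      obtain ⟨w, hw, hh | hh⟩ := dichotomy hx hlt hA hint hnc he he'E hn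
      · exact Finset.mem_union_left _ (Finset.mem_union_right _
          (Finset.mem_filter.2 ⟨he, w, hw, hh⟩))
      · exact Finset.mem_union_right _ (Finset.mem_filter.2 ⟨he, w, hw, e', he'E, hn, hh⟩)
  have c1 : E1.card ≤ A.card := by
    refine Finset.card_le_card_of_injOn (fun e => e.1) ?_ ?_
    · intro e he
      exact (hA e (Finset.mem_filter.1 he).1).1
    · intro e he f hf hef
      obtain ⟨he, he'⟩ := Finset.mem_filter.1 he
      obtain ⟨hf, hf'⟩ := Finset.mem_filter.1 hf
      exact same_slope hx hlt hA hint he hf hef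
        (le_antisymm (hf' e he hef) (he' f hf hef.symm))
  have c2 : E2.card ≤ A.card := by
    refine Finset.card_le_card_of_forall_subsingleton (Bel x y E)
      (fun e he => (Finset.mem_filter.1 he).2) ?_
    rintro w hw e ⟨he, he'⟩ f ⟨hf, hf'⟩
    exact Bel_uniq hnc (Finset.mem_filter.1 he).1 (Finset.mem_filter.1 hf).1 he' hf'
  have c3 : E3.card ≤ A.card := by
    refine Finset.card_le_card_of_forall_subsingleton
      (fun e w => ∃ e' ∈ E, Nxt x y E e e' ∧ Abv x y E e' w)
      (fun e he => (Finset.mem_filter.1 he).2) ?_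
    rintro w hw e ⟨he, e', he', hn, ha⟩ f ⟨hf, f', hf', hn', ha'⟩
    have he := (Finset.mem_filter.1 he).1
    have hf := (Finset.mem_filter.1 hf).1
    have := Abv_uniq hnc he' hf' ha ha'
    subst this
    have hef : e.1 = f.1 := hn.1.symm.trans hn'.1
    refine same_slope hx hlt hA hint he hf hef ?_
    rcases lt_trichotomy (slp x y e) (slp x y f) with h | h | h
    · have := hn.2.2 f hf hef.symm h
      linarith [hn'.2.1]
    · exact h
    · have := hn'.2.2 e he hef h
      linarith [hn.2.1]
  calc E.card ≤ (E1 ∪ E2 ∪ E3).card := Finset.card_le_card hc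
    _ ≤ E1.card + E2.card + E3.card :=
      (Finset.card_union_le _ _).trans (Nat.add_le_add_right (Finset.card_union_le _ _) _)
    _ ≤ 3 * A.card := by omega

open Classical in
lemma deletion (hx : Function.Injective x)
    (hlt : ∀ e ∈ E, x e.1 < x e.2)
    (hA : ∀ e ∈ E, e.1 ∈ A ∧ e.2 ∈ A)
    (hint : ∀ e ∈ E, ∀ w ∈ A, x e.1 < x w → x w < x e.2 → hgt x y e (x w) ≠ y w) :
    E.card ≤ 3 * A.card + ((E ×ˢ E).filter fun p => Crs x y p.1 p.2).card := by
  let E' := E.filter fun e => ∀ f ∈ E, ¬ Crs x y e f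
  have h1 : E'.card ≤ 3 * A.card := by
    have hs : E' ⊆ E := Finset.filter_subset _ _
    exact linear_bound hx (fun e he => hlt e (hs he)) (fun e he => hA e (hs he))
      (fun e he => hint e (hs he)) (fun e he f hf => (Finset.mem_filter.1 he).2 f (hs hf))
  have h2 : (E.filter fun e => ¬ ∀ f ∈ E, ¬ Crs x y e f).card ≤
      ((E ×ˢ E).filter fun p => Crs x y p.1 p.2).card := by
    refine Finset.card_le_card_of_surjOn Prod.fst ?_
    intro e he
    obtain ⟨he, h⟩ := Finset.mem_filter.1 he
    push Not at h
    obtain ⟨f, hf, hc⟩ := h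
    exact ⟨(e, f), by simp [he, hf, hc], rfl⟩
  have := Finset.card_filter_add_card_filter_not (s := E) (fun e => ∀ f ∈ E, ¬ Crs x y e f)
  change E'.card + _ = _ at this
  omega

end lin

section avg
open Classical

lemma count_col {V : Type*} [Fintype V] (t : ℕ) (T : Finset V) :
    (Finset.univ.filter fun f : V → Fin (t + 1) => ∀ a ∈ T, f a = 0).card * (t + 1) ^ T.card
      = (t + 1) ^ Fintype.card V := by
  have h : (Finset.univ.filter fun f : V → Fin (t + 1) => ∀ a ∈ T, f a = 0) =
      Fintype.piFinset (fun a => if a ∈ T then ({0} : Finset (Fin (t + 1))) else Finset.univ) := by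
    ext f
    simp only [Finset.mem_filter, Finset.mem_univ, true_and, Fintype.mem_piFinset]
    refine forall_congr' fun a => ?_
    by_cases ha : a ∈ T <;> simp [ha]
  rw [h, Fintype.card_piFinset]
  have h2 : ∀ a, (if a ∈ T then ({0} : Finset (Fin (t + 1))) else Finset.univ).card =
      if a ∈ T then 1 else (t + 1) := by
    intro a; split_ifs <;> simp
  simp only [h2]
  rw [Finset.prod_ite]
  simp only [Finset.prod_const_one, Finset.prod_const, one_mul]
  rw [← pow_add]
  congr 1
  have := Finset.card_filter_add_card_filter_not (s := (Finset.univ : Finset V)) (fun a => a ∈ T)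
  simp only [Finset.filter_univ_mem, Finset.card_univ] at this
  omega

lemma sum_col {V ι : Type*} [Fintype V] (t j : ℕ) (X : Finset ι) (T : ι → Finset V)
    (hT : ∀ i ∈ X, (T i).card = j) :
    (∑ f : V → Fin (t + 1), (X.filter fun i => ∀ a ∈ T i, f a = 0).card) * (t + 1) ^ j
      = X.card * (t + 1) ^ Fintype.card V := by
  simp_rw [Finset.card_filter]
  rw [Finset.sum_comm, Finset.sum_mul]
  rw [Finset.sum_congr rfl (g := fun _ => (t + 1) ^ Fintype.card V)]
  · simp
  · intro i hi
    rw [← Finset.card_filter, ← hT i hi, count_col]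

lemma averaging {V : Type*} [Fintype V] {x y : V → ℝ} {E : Finset (V × V)}
    (hx : Function.Injective x)
    (hlt : ∀ e ∈ E, x e.1 < x e.2)
    (hint : ∀ e ∈ E, ∀ w, x e.1 < x w → x w < x e.2 → hgt x y e (x w) ≠ y w)
    (hd : ∀ e ∈ E, ∀ f ∈ E, Crs x y e f → e.1 ≠ f.1 ∧ e.2 ≠ f.2) (t : ℕ) :
    E.card * (t + 1) ^ 2 ≤ 3 * Fintype.card V * (t + 1) ^ 3 +
      ((E ×ˢ E).filter fun p => Crs x y p.1 p.2).card := by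
  set Cr := (E ×ˢ E).filter fun p => Crs x y p.1 p.2 with hCr
  have s1 := sum_col (V := V) t 1 Finset.univ (fun v => {v}) (by simp)
  have s2 := sum_col (V := V) t 2 E (fun e => {e.1, e.2}) (by
    intro e he
    exact Finset.card_pair (fun h => (hlt e he).ne (by rw [h])))
  have s4 := sum_col (V := V) t 4 Cr (fun p => {p.1.1, p.1.2, p.2.1, p.2.2}) (by
    rintro ⟨e, f⟩ hp
    obtain ⟨hp, hc⟩ := Finset.mem_filter.1 hp
    obtain ⟨he, hf⟩ := Finset.mem_product.1 hp
    obtain ⟨d1, d2⟩ := hd e he f hf hc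
    obtain ⟨-, s, h1, h2, h3, h4, -⟩ := hc
    simp only at he hf h1 h2 h3 h4
    have n1 : e.1 ≠ e.2 := fun h => by rw [h] at h1; linarith
    have n2 : e.1 ≠ f.2 := fun h => by rw [h] at h1; linarith
    have n3 : e.2 ≠ f.1 := fun h => by rw [h] at h2; linarith
    have n4 : f.1 ≠ f.2 := fun h => by rw [h] at h3; linarith
    simp [Finset.card_insert_of_notMem, *])
  have key : ∀ f : V → Fin (t + 1),
      (E.filter fun e => ∀ a ∈ ({e.1, e.2} : Finset V), f a = 0).card ≤
      3 * (Finset.univ.filter fun v => ∀ a ∈ ({v} : Finset V), f a = 0).card +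
      (Cr.filter fun p => ∀ a ∈ ({p.1.1, p.1.2, p.2.1, p.2.2} : Finset V), f a = 0).card := by
    intro f
    set E' := E.filter fun e => ∀ a ∈ ({e.1, e.2} : Finset V), f a = 0 with hE'
    have hs : E' ⊆ E := Finset.filter_subset _ _
    refine (deletion (x := x) (y := y) (E := E')
      (A := Finset.univ.filter fun v => ∀ a ∈ ({v} : Finset V), f a = 0) hx
      (fun e he => hlt e (hs he)) ?_ (fun e he w _ => hint e (hs he) w)).trans ?_
    · intro e he
      have := (Finset.mem_filter.1 he).2
      simpa using this
    · refine Nat.add_le_add_left (Finset.card_le_card ?_) _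
      rintro ⟨e, g⟩ hp
      simp only [hE', hCr, Finset.mem_filter, Finset.mem_product] at hp ⊢
      refine ⟨⟨⟨hp.1.1.1, hp.1.2.1⟩, hp.2⟩, ?_⟩
      have a1 := hp.1.1.2
      have a2 := hp.1.2.2
      simp at a1 a2 ⊢
      tauto
  have ks := Finset.sum_le_sum fun f (_ : f ∈ (Finset.univ : Finset (V → Fin (t + 1)))) => key f
  rw [Finset.sum_add_distrib, ← Finset.mul_sum] at ks
  have hN : 0 < (t + 1) ^ Fintype.card V := by positivity
  refine Nat.le_of_mul_le_mul_right ?_ hN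
  simp only [Finset.card_univ] at s1
  calc _ = (E.card * (t + 1) ^ Fintype.card V) * (t + 1) ^ 2 := by ring
    _ ≤ 3 * (Fintype.card V * (t + 1) ^ Fintype.card V) * (t + 1) ^ 3 +
        Cr.card * (t + 1) ^ Fintype.card V := by
      rw [← s1, ← s2, ← s4]
      refine le_trans (le_of_eq (by ring)) ((Nat.mul_le_mul_right ((t + 1) ^ 4) ks).trans
        (le_of_eq ?_))
      ring
    _ = _ := by ring

end avg

section conc
open Classical
variable {V : Type*} [Fintype V]

/-- consecutive pairs on a line -/
def Eln (x y : V → ℝ) (l : ℝ × ℝ) : Finset (V × V) :=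
  Finset.univ.filter fun e => x e.1 < x e.2 ∧ y e.1 = l.1 * x e.1 + l.2 ∧
    y e.2 = l.1 * x e.2 + l.2 ∧
    ∀ w, y w = l.1 * x w + l.2 → x e.1 < x w → ¬ x w < x e.2

lemma Eln_hgt {x y : V → ℝ} {l : ℝ × ℝ} {e : V × V} (he : e ∈ Eln x y l) (s : ℝ) :
    hgt x y e s = l.1 * s + l.2 := by
  obtain ⟨-, h1, h2, h3, -⟩ := Finset.mem_filter.1 he
  have : x e.2 - x e.1 ≠ 0 := by linarith
  have hs : slp x y e = l.1 := by
    rw [slp, h2, h3, div_eq_iff this]; ring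
  rw [hgt, hs, h2]; ring

lemma Eln_uniq {x y : V → ℝ} (hx : Function.Injective x) {l : ℝ × ℝ} {e f : V × V}
    (he : e ∈ Eln x y l) (hf : f ∈ Eln x y l) {s : ℝ}
    (h1 : x e.1 < s) (h2 : s < x e.2) (h3 : x f.1 < s) (h4 : s < x f.2) : e = f := by
  obtain ⟨-, a1, a2, a3, a4⟩ := Finset.mem_filter.1 he
  obtain ⟨-, b1, b2, b3, b4⟩ := Finset.mem_filter.1 hf
  refine Prod.ext (hx ?_) (hx ?_)
  · rcases lt_trichotomy (x e.1) (x f.1) with h | h | h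
    · exact absurd (by linarith) (a4 _ b2 h)
    · exact h
    · exact absurd (by linarith) (b4 _ a2 h)
  · rcases lt_trichotomy (x e.2) (x f.2) with h | h | h
    · exact absurd h (b4 _ a3 (by linarith))
    · exact h
    · exact absurd h (a4 _ b3 (by linarith))

lemma lines_meet {l l' : ℝ × ℝ} (hne : l ≠ l') {s s' : ℝ}
    (h : l.1 * s + l.2 = l'.1 * s + l'.2) (h' : l.1 * s' + l.2 = l'.1 * s' + l'.2) : s = s' := by
  have h0 : (l.1 - l'.1) * (s - s') = 0 := by linear_combination h - h'
  rcases mul_eq_zero.1 h0 with h1 | h1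
  · have h2 : l.1 = l'.1 := by linarith
    rw [h2] at h
    exact absurd (Prod.ext h2 (by linarith)) hne
  · linarith

lemma Eln_card {x y : V → ℝ} (hx : Function.Injective x) (l : ℝ × ℝ) :
    (Finset.univ.filter fun v => y v = l.1 * x v + l.2).card ≤ (Eln x y l).card + 1 := by
  set P := Finset.univ.filter fun v => y v = l.1 * x v + l.2 with hP
  rcases P.eq_empty_or_nonempty with h | h
  · simp [h]
  obtain ⟨m, hm, hmax⟩ := Finset.exists_max_image P x h
  have hsub : P.erase m ⊆ (Eln x y l).image Prod.fst := by
    intro u hu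
    obtain ⟨hum, huP⟩ := Finset.mem_erase.1 hu
    have hlt : x u < x m := lt_of_le_of_ne (hmax u huP) (fun h => hum (hx h))
    obtain ⟨v, hv, hmin⟩ := Finset.exists_min_image (P.filter fun v => x u < x v) x
      ⟨m, Finset.mem_filter.2 ⟨hm, hlt⟩⟩
    obtain ⟨hvP, huv⟩ := Finset.mem_filter.1 hv
    refine Finset.mem_image.2 ⟨(u, v), Finset.mem_filter.2 ⟨Finset.mem_univ _, huv,
      (Finset.mem_filter.1 huP).2, (Finset.mem_filter.1 hvP).2, ?_⟩, rfl⟩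
    intro w hw h1 h2
    have := hmin w (Finset.mem_filter.2 ⟨Finset.mem_filter.2 ⟨Finset.mem_univ _, hw⟩, h1⟩)
    simp only at h2
    linarith
  have h1 := (Finset.card_le_card hsub).trans Finset.card_image_le
  rw [Finset.card_erase_of_mem hm] at h1
  omega

lemma comb_bound {x y : V → ℝ} (hx : Function.Injective x) (Λ : Finset (ℝ × ℝ)) (k : ℕ)
    (hk : ∀ l ∈ Λ, k ≤ (Finset.univ.filter fun v => y v = l.1 * x v + l.2).card) :
    ∃ N : ℕ, Λ.card * (k - 1) ≤ N ∧ ∀ t : ℕ,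
      N * (t + 1) ^ 2 ≤ 3 * Fintype.card V * (t + 1) ^ 3 + Λ.card ^ 2 := by
  set E := Λ.biUnion (Eln x y) with hE
  have hmem : ∀ e ∈ E, ∃ l ∈ Λ, e ∈ Eln x y l := fun e he => Finset.mem_biUnion.1 he
  have hlt : ∀ e ∈ E, x e.1 < x e.2 := by
    intro e he
    obtain ⟨l, -, h⟩ := hmem e he
    exact (Finset.mem_filter.1 h).2.1
  have hne : ∀ {l l' e f}, e ∈ Eln x y l → f ∈ Eln x y l' → Crs x y e f → l ≠ l' := by
    rintro l l' e f he hf ⟨hn, s, h1, h2, h3, h4, -⟩ rfl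
    exact hn (Eln_uniq hx he hf h1 h2 h3 h4)
  refine ⟨E.card, ?_, fun t => ?_⟩
  · rw [hE, Finset.card_biUnion]
    · rw [← smul_eq_mul]
      refine Finset.card_nsmul_le_sum _ _ _ fun l hl => ?_
      have := Eln_card (y := y) hx l
      have := hk l hl
      omega
    · intro l hl l' hl' hn
      rw [Function.onFun, Finset.disjoint_left]
      intro e he he'
      obtain ⟨-, h1, h2, h3, -⟩ := Finset.mem_filter.1 he
      obtain ⟨-, -, h2', h3', -⟩ := Finset.mem_filter.1 he'
      exact h1.ne (lines_meet hn (h2.symm.trans h2') (h3.symm.trans h3'))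
  · have ha := averaging (x := x) (y := y) (E := E) hx hlt ?_ ?_ t
    · refine ha.trans (Nat.add_le_add_left ?_ _)
      rw [sq, ← Finset.card_product]
      refine Finset.card_le_card_of_forall_subsingleton
        (fun p q => p.1 ∈ Eln x y q.1 ∧ p.2 ∈ Eln x y q.2) ?_ ?_
      · rintro ⟨e, f⟩ hp
        obtain ⟨hp, -⟩ := Finset.mem_filter.1 hp
        obtain ⟨he, hf⟩ := Finset.mem_product.1 hp
        obtain ⟨l, hl, h⟩ := hmem e he
        obtain ⟨l', hl', h'⟩ := hmem f hf
        exact ⟨(l, l'), Finset.mem_product.2 ⟨hl, hl'⟩, h, h'⟩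
      · rintro ⟨l, l'⟩ - ⟨e, f⟩ ⟨hp, he, hf⟩ ⟨e', f'⟩ ⟨hp', he', hf'⟩
        have hc := (Finset.mem_filter.1 hp).2
        have hc' := (Finset.mem_filter.1 hp').2
        have hn := hne he hf hc
        obtain ⟨-, s, h1, h2, h3, h4, h5⟩ := hc
        obtain ⟨-, s', h1', h2', h3', h4', h5'⟩ := hc'
        rw [Eln_hgt he, Eln_hgt hf] at h5
        rw [Eln_hgt he', Eln_hgt hf'] at h5'
        have := lines_meet hn h5 h5'
        subst this
        exact Prod.ext (Eln_uniq hx he he' h1 h2 h1' h2') (Eln_uniq hx hf hf' h3 h4 h3' h4')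
    · intro e he w h1 h2 h3
      obtain ⟨l, -, h⟩ := hmem e he
      rw [Eln_hgt h] at h3
      exact (Finset.mem_filter.1 h).2.2.2.2 w h3.symm h1 h2
    · intro e he f hf hc
      obtain ⟨l, -, h⟩ := hmem e he
      obtain ⟨l', -, h'⟩ := hmem f hf
      have hn := hne h h' hc
      obtain ⟨-, s, h1, h2, h3, h4, h5⟩ := hc
      rw [Eln_hgt h, Eln_hgt h'] at h5
      obtain ⟨-, -, a2, a3, -⟩ := Finset.mem_filter.1 h
      obtain ⟨-, -, b2, b3, -⟩ := Finset.mem_filter.1 h'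
      constructor
      · intro heq
        rw [← heq] at b2
        exact h1.ne' (lines_meet hn h5 (a2.symm.trans b2))
      · intro heq
        rw [← heq] at b3
        exact h2.ne (lines_meet hn h5 (a3.symm.trans b3))

end conc

lemma numeric (n k m N : ℕ) (hk : 2 ≤ k) (h1 : m * (k - 1) ≤ N)
    (h2 : ∀ t : ℕ, N * (t + 1) ^ 2 ≤ 3 * n * (t + 1) ^ 3 + m ^ 2) :
    (m : ℝ) ≤ 2304 * ((n : ℝ) ^ 2 / (k : ℝ) ^ 3 + (n : ℝ) / (k : ℝ)) := by
  have hk0 : (0 : ℝ) < k := by positivity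
  have hkN : m * k ≤ 2 * N := by
    have : k ≤ 2 * (k - 1) := by omega
    nlinarith
  have hkR : (m : ℝ) * k ≤ 2 * N := by exact_mod_cast hkN
  rcases Nat.lt_or_ge N (6 * n) with h | h
  · have hR : (N : ℝ) < 6 * n := by exact_mod_cast h
    have h3 : (m : ℝ) ≤ 12 * (n / k) := by
      rw [mul_div_assoc', le_div_iff₀ hk0]; linarith
    have : (0 : ℝ) ≤ (n : ℝ) ^ 2 / (k : ℝ) ^ 3 := by positivity
    have : (0 : ℝ) ≤ (n : ℝ) / k := by positivity
    linarith
  · rcases Nat.eq_zero_or_pos n with hn | hn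
    · subst hn
      -- no vertices: large t forces N = 0
      have h3 := h2 (m ^ 2)
      have hm : m = 0 := by
        by_contra hm
        have h4 : 0 < m := Nat.pos_of_ne_zero hm
        have : 0 < N := by nlinarith
        nlinarith [sq_nonneg (m : ℤ), Nat.one_le_pow 2 m h4]
      subst hm
      simp
    · obtain ⟨t, ht⟩ : ∃ t, N / (6 * n) = t + 1 :=
        ⟨N / (6 * n) - 1, by have := Nat.div_pos h (by positivity); omega⟩
      have h3 : 6 * n * (t + 1) ≤ N := by rw [← ht]; exact Nat.mul_div_le N (6 * n)
      have h4 : N ≤ 12 * n * (t + 1) := by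
        have := Nat.lt_mul_div_succ N (show 0 < 6 * n by positivity)
        rw [ht] at this
        nlinarith
      have h5 := h2 t
      have h6 : N * (t + 1) ^ 2 ≤ 2 * m ^ 2 := by
        have : 6 * n * (t + 1) * (t + 1) ^ 2 ≤ N * (t + 1) ^ 2 := Nat.mul_le_mul_right _ h3
        nlinarith
      have h7 : N ^ 3 ≤ 288 * n ^ 2 * m ^ 2 := by
        calc N ^ 3 = N * N ^ 2 := by ring
          _ ≤ N * (12 * n * (t + 1)) ^ 2 := by gcongr
          _ = 144 * n ^ 2 * (N * (t + 1) ^ 2) := by ring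
          _ ≤ 144 * n ^ 2 * (2 * m ^ 2) := by gcongr
          _ = _ := by ring
      have h8 : (m * k) ^ 3 ≤ 2304 * n ^ 2 * m ^ 2 := by
        calc (m * k) ^ 3 ≤ (2 * N) ^ 3 := by gcongr
          _ = 8 * N ^ 3 := by ring
          _ ≤ 8 * (288 * n ^ 2 * m ^ 2) := by gcongr
          _ = _ := by ring
      have h9 : m * k ^ 3 ≤ 2304 * n ^ 2 := by
        rcases Nat.eq_zero_or_pos m with hm | hm
        · simp [hm]
        · refine Nat.le_of_mul_le_mul_right ?_ (show 0 < m ^ 2 by positivity)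
          linarith [show m * k ^ 3 * m ^ 2 = (m * k) ^ 3 by ring]
      have h10 : (m : ℝ) * k ^ 3 ≤ 2304 * n ^ 2 := by exact_mod_cast h9
      have h11 : (m : ℝ) ≤ 2304 * ((n : ℝ) ^ 2 / (k : ℝ) ^ 3) := by
        rw [mul_div_assoc', le_div_iff₀ (by positivity)]; exact h10
      have : (0 : ℝ) ≤ (n : ℝ) / k := by positivity
      linarith

lemma exists_shear (S : Finset (ℝ × ℝ)) :
    ∃ t : ℝ, ∀ p ∈ S, ∀ q ∈ S, p.1 + t * p.2 = q.1 + t * q.2 → p = q := by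
  obtain ⟨t, ht⟩ := Infinite.exists_notMem_finset
    ((S ×ˢ S).image fun p => (p.2.1 - p.1.1) / (p.1.2 - p.2.2))
  refine ⟨t, fun p hp q hq h => ?_⟩
  by_cases h2 : p.2 = q.2
  · rw [h2] at h
    exact Prod.ext (by linarith) h2
  · exfalso
    apply ht
    refine Finset.mem_image.2 ⟨(p, q), Finset.mem_product.2 ⟨hp, hq⟩, ?_⟩
    have : p.2 - q.2 ≠ 0 := sub_ne_zero.2 h2
    simp only
    rw [div_eq_iff this]
    linarith

lemma line_eqn {L : Set (ℝ × ℝ)} (hL : IsLine L) (t : ℝ) {p q : ℝ × ℝ} (hp : p ∈ L) (hq : q ∈ L)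
    (hpq : p.1 + t * p.2 ≠ q.1 + t * q.2) :
    ∃ l : ℝ × ℝ, ∀ z : ℝ × ℝ, z ∈ L ↔ z.2 = l.1 * (z.1 + t * z.2) + l.2 := by
  obtain ⟨a, b, hab, rfl⟩ := hL
  have hm : ∀ z : ℝ × ℝ, z ∈ lineThrough a b ↔
      ∃ c : ℝ, z.1 = a.1 + c * (b.1 - a.1) ∧ z.2 = a.2 + c * (b.2 - a.2) := by
    intro z
    rw [lineThrough, SetLike.mem_coe, mem_affineSpan_pair_iff_exists_lineMap_eq]
    refine exists_congr fun c => ?_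
    rw [AffineMap.lineMap_apply, Prod.ext_iff]
    simp only [vsub_eq_sub, vadd_eq_add, Prod.fst_add, Prod.smul_fst, Prod.fst_sub, Prod.snd_add,
      Prod.smul_snd, Prod.snd_sub, smul_eq_mul]
    constructor
    · rintro ⟨h1, h2⟩; exact ⟨by linarith, by linarith⟩
    · rintro ⟨h1, h2⟩; exact ⟨by linarith, by linarith⟩
  have hD : (b.1 - a.1) + t * (b.2 - a.2) ≠ 0 := by
    intro h0
    obtain ⟨c, h1, h2⟩ := (hm p).1 hp
    obtain ⟨d, h3, h4⟩ := (hm q).1 hq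
    apply hpq
    rw [h1, h2, h3, h4]
    linear_combination (c - d) * h0
  set D := (b.1 - a.1) + t * (b.2 - a.2) with hDdef
  refine ⟨((b.2 - a.2) / D, a.2 - (b.2 - a.2) / D * (a.1 + t * a.2)), fun z => ?_⟩
  rw [hm]
  constructor
  · rintro ⟨c, h1, h2⟩
    have : z.1 + t * z.2 = a.1 + t * a.2 + c * D := by rw [h1, h2, hDdef]; ring
    simp only
    rw [this, h2]
    field_simp
    ring
  · intro h
    simp only at h
    have h2 : z.2 = a.2 + (z.1 + t * z.2 - (a.1 + t * a.2)) / D * (b.2 - a.2) := by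
      exact h.trans (by ring)
    refine ⟨(z.1 + t * z.2 - (a.1 + t * a.2)) / D, ?_, h2⟩
    have h3 : (z.1 + t * z.2 - (a.1 + t * a.2)) / D * D = z.1 + t * z.2 - (a.1 + t * a.2) :=
      div_mul_cancel₀ _ hD
    have h4 : (z.1 + t * z.2 - (a.1 + t * a.2)) / D * (b.1 - a.1) =
      z.1 + t * z.2 - (a.1 + t * a.2) -
        t * ((z.1 + t * z.2 - (a.1 + t * a.2)) / D * (b.2 - a.2)) := by
      linear_combination h3 - (z.1 + t * z.2 - (a.1 + t * a.2)) / D * hDdef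
    linear_combination -h4 - t * h2

end STproof

/-- Szemerédi–Trotter theorem, rich-lines form: the number of `k`-rich lines in a
finite family `𝓛`, with respect to an `n`-point set, is at most `C(n²/k³ + n/k)`. -/
theorem szemeredi_trotter_rich_lines :
    ∃ C : ℝ, 0 < C ∧ ∀ (S : Finset (ℝ × ℝ)) (𝓛 : Finset (Set (ℝ × ℝ))) (n k : ℕ),
      S.card = n → (∀ L ∈ 𝓛, IsLine L) → 2 ≤ k →
      (((𝓛.filter fun L => k ≤ richness S L).card : ℝ)) ≤
        C * ((n : ℝ) ^ 2 / (k : ℝ) ^ 3 + (n : ℝ) / (k : ℝ)) := by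
  classical
  refine ⟨2304, by norm_num, ?_⟩
  intro S 𝓛 n k hn hL hk
  obtain ⟨t, ht⟩ := STproof.exists_shear S
  set F := 𝓛.filter fun L => k ≤ richness S L with hF
  have hl : ∀ L ∈ F, ∃ l : ℝ × ℝ, ∀ z : ℝ × ℝ, z ∈ L ↔ z.2 = l.1 * (z.1 + t * z.2) + l.2 := by
    intro L hLF
    obtain ⟨h1, h2⟩ := Finset.mem_filter.1 hLF
    have h3 : 1 < ((S : Set (ℝ × ℝ)) ∩ L).ncard := lt_of_lt_of_le hk h2
    obtain ⟨p, q, hp, hq, hpq⟩ :=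
      (Set.one_lt_ncard_iff (S.finite_toSet.subset Set.inter_subset_left)).1 h3
    exact STproof.line_eqn (hL L h1) t hp.2 hq.2 fun h => hpq (ht p hp.1 q hq.1 h)
  choose! φ hφ using hl
  have hcard : (F.image φ).card = F.card := by
    refine Finset.card_image_of_injOn fun L hL1 L' hL2 h => ?_
    ext z
    rw [hφ L hL1, hφ L' hL2, h]
  obtain ⟨N, hN1, hN2⟩ := STproof.comb_bound (V := S)
    (x := fun v => v.1.1 + t * v.1.2) (y := fun v => v.1.2)
    (fun v w h => Subtype.ext (ht v.1 v.2 w.1 w.2 h)) (F.image φ) k (by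
      intro l hl
      obtain ⟨L, hLF, rfl⟩ := Finset.mem_image.1 hl
      refine (Finset.mem_filter.1 hLF).2.trans ?_
      rw [richness, ← Finset.card_map (Function.Embedding.subtype _), ← Set.ncard_coe_finset]
      refine Set.ncard_le_ncard ?_ (Finset.finite_toSet _)
      rintro z ⟨hzS, hzL⟩
      have hz : z ∈ S := hzS
      simpa [hz] using (hφ L hLF z).1 hzL)
  rw [hcard] at hN1 hN2
  rw [Fintype.card_coe, hn] at hN2
  exact STproof.numeric n k F.card N hk hN1 hN2
end
end

section
/- There is an absolute constant K₁ > 0 with the following property. Let P and Q be disjoint finite sets of points in the Euclidean plane ℝ² with |P| = |Q| = n. Then the number of pairs (p, q) with p ∈ P and q ∈ Q such that the line through p and q has richness at least 1/K₁ and at most K₁ · n with respect to P ∪ Q is at most n²/2. Equivalently, at least n²/2 of the n² bichromatic pairs (p, q) induce a line whose richness is either less than 1/K₁ or greater than K₁ · n. -/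
open Set

noncomputable section

abbrev Pt := ℝ × ℝ
abbrev Ed := (ℝ × ℝ) × (ℝ × ℝ)

def slp (e : Ed) : ℝ := (e.2.2 - e.1.2) / (e.2.1 - e.1.1)
def hgt (e : Ed) (x : ℝ) : ℝ := e.1.2 + slp e * (x - e.1.1)

/-- good edge system -/
structure Good (V : Finset Pt) (E : Finset Ed) : Prop where
  inj : ∀ p ∈ V, ∀ q ∈ V, p.1 = q.1 → p = q
  l : ∀ e ∈ E, e.1 ∈ V
  r : ∀ e ∈ E, e.2 ∈ V
  lt : ∀ e ∈ E, e.1.1 < e.2.1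
  av : ∀ e ∈ E, ∀ w ∈ V, e.1.1 < w.1 → w.1 < e.2.1 → hgt e w.1 ≠ w.2

def Crs (e f : Ed) : Prop :=
  ∃ x, e.1.1 < x ∧ f.1.1 < x ∧ x < e.2.1 ∧ x < f.2.1 ∧ hgt e x = hgt f x

lemma hgt_l (e : Ed) : hgt e e.1.1 = e.1.2 := by simp [hgt]

lemma hgt_r (e : Ed) (h : e.1.1 < e.2.1) : hgt e e.2.1 = e.2.2 := by
  have : e.2.1 - e.1.1 ≠ 0 := by linarith
  unfold hgt slp; field_simp; ring

lemma hgt_eq (e f : Ed) {x y : ℝ} (hxy : x ≠ y) (h1 : hgt e x = hgt f x) (h2 : hgt e y = hgt f y)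
    (z : ℝ) : hgt e z = hgt f z := by
  unfold hgt at *
  have h3 : (slp e - slp f) * (x - y) = 0 := by linear_combination h1 - h2
  have h4 : slp e - slp f = 0 := by
    rcases mul_eq_zero.1 h3 with h | h
    · exact h
    · exact absurd (sub_eq_zero.1 h) hxy
  linear_combination h1 + h4 * (z - x)

lemma Good.same {V E} (G : Good V E) {e f : Ed} (he : e ∈ E) (hf : f ∈ E)
    (h : ∀ z, hgt e z = hgt f z) (h1 : e.1.1 < f.2.1) (h2 : f.1.1 < e.2.1) : e = f := by
  have hl : e.1.1 = f.1.1 := by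
    rcases lt_trichotomy e.1.1 f.1.1 with h3 | h3 | h3
    · exact absurd (by rw [h, hgt_l]) (G.av e he f.1 (G.l f hf) h3 h2)
    · exact h3
    · exact absurd (by rw [← h, hgt_l]) (G.av f hf e.1 (G.l e he) h3 h1)
  have hr : e.2.1 = f.2.1 := by
    rcases lt_trichotomy e.2.1 f.2.1 with h3 | h3 | h3
    · exact absurd (by rw [← h, hgt_r e (G.lt e he)]) (G.av f hf e.2 (G.r e he) h2 h3)
    · exact h3
    · exact absurd (by rw [h, hgt_r f (G.lt f hf)]) (G.av e he f.2 (G.r f hf) h1 h3)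
  exact Prod.ext (G.inj _ (G.l e he) _ (G.l f hf) hl) (G.inj _ (G.r e he) _ (G.r f hf) hr)

/-- sign persistence for noncrossing edges -/
lemma persist (e f : Ed) (hc : ¬ Crs e f) {s x0 : ℝ} (hs1 : e.1.1 ≤ s) (hs2 : f.1.1 ≤ s)
    (hx : s < x0) (hx1 : x0 < e.2.1) (hx2 : x0 < f.2.1) (h : hgt e x0 ≤ hgt f x0) :
    hgt e x0 < hgt f x0 ∧ hgt e s ≤ hgt f s := by
  have h0 : hgt e x0 < hgt f x0 := by
    refine lt_of_le_of_ne h fun h' => hc ⟨x0, by linarith, by linarith, hx1, hx2, h'⟩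
  refine ⟨h0, ?_⟩
  by_contra hcon
  push Not at hcon
  have hcont : ContinuousOn (fun x => hgt e x - hgt f x) (Set.Icc s x0) := by
    unfold hgt; fun_prop
  have := intermediate_value_Ioo' hx.le hcont
  obtain ⟨x, hx3, hx4⟩ := this (show (0:ℝ) ∈ _ from ⟨by linarith, by linarith⟩)
  dsimp only at hx4
  exact hc ⟨x, by linarith [hx3.1], by linarith [hx3.1], by linarith [hx3.2], by linarith [hx3.2],
    by linarith⟩

def Nxt (E : Finset Ed) (e e' : Ed) : Prop :=
  e' ∈ E ∧ e'.1 = e.1 ∧ slp e < slp e' ∧ ∀ f ∈ E, f.1 = e.1 → slp e < slp f → slp e' ≤ slp f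

def InW (e e' : Ed) (w : Pt) : Prop :=
  e.1.1 < w.1 ∧ w.1 ≤ e.2.1 ∧ w.1 ≤ e'.2.1 ∧ hgt e w.1 ≤ w.2 ∧ w.2 ≤ hgt e' w.1

def Fst (V : Finset Pt) (e e' : Ed) (w : Pt) : Prop :=
  w ∈ V ∧ InW e e' w ∧ ∀ z ∈ V, InW e e' z → w.1 ≤ z.1

lemma intruder {V E} (G : Good V E) (hN : ∀ e ∈ E, ∀ f ∈ E, e ≠ f → ¬ Crs e f)
    {e e' f : Ed} {w : Pt} (he : e ∈ E) (hf : f ∈ E) (hn : Nxt E e e') (hw : Fst V e e' w)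
    {x0 : ℝ} (hx0 : e.1.1 < x0) (hx1 : f.1.1 < x0) (hx2 : x0 < w.1) (hx3 : w.1 ≤ f.2.1)
    (h1 : hgt e x0 ≤ hgt f x0) (h2 : hgt f x0 ≤ hgt e' x0) : f = e ∨ f = e' := by
  by_contra hcon
  push Not at hcon
  obtain ⟨he', hu, hsl, hmin⟩ := hn
  obtain ⟨hwV, ⟨w1, w2, w3, w4, w5⟩, wmin⟩ := hw
  have hs1 : e.1.1 ≤ max e.1.1 f.1.1 := le_max_left _ _
  have hs2 : f.1.1 ≤ max e.1.1 f.1.1 := le_max_right _ _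
  have hs : max e.1.1 f.1.1 < x0 := max_lt hx0 hx1
  obtain ⟨a1, a2⟩ := persist e f (hN e he f hf hcon.1.symm) hs1 hs2 hs (by linarith) (by linarith) h1
  obtain ⟨b1, b2⟩ := persist f e' (hN f hf e' he' hcon.2) hs2 (by rw [hu]; exact hs1) hs
    (by linarith) (by linarith) h2
  rcases lt_trichotomy e.1.1 f.1.1 with h | h | h
  · rw [max_eq_right h.le, hgt_l] at *
    have := wmin f.1 (G.l f hf) ⟨h, by linarith, by linarith, a2, b2⟩
    linarith
  · have hfe : f.1 = e.1 := (G.inj _ (G.l e he) _ (G.l f hf) h).symm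
    unfold hgt at a1 b1
    rw [hu, hfe] at b1
    rw [hfe] at a1
    have c1 : slp e < slp f := by
      by_contra hh; push Not at hh
      nlinarith
    have c2 := hmin f hf hfe c1
    nlinarith
  · rw [max_eq_left h.le] at *
    have e1 : hgt e' e.1.1 = e.1.2 := by rw [← hu]; exact hgt_l e'
    rw [hgt_l] at a2
    rw [e1] at b2
    exact G.av f hf e.1 (G.l e he) h (by linarith) (le_antisymm b2 a2)

lemma exists_fst {V E} (G : Good V E) {e e' : Ed} (he : e ∈ E) (hn : Nxt E e e') :
    ∃ w, Fst V e e' w := by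
  classical
  obtain ⟨he', hu, hsl, hmin⟩ := hn
  have key : ∀ x, e.1.1 < x → hgt e x < hgt e' x := by
    intro x hx
    unfold hgt; rw [hu]; nlinarith
  have hne : (V.filter (InW e e')).Nonempty := by
    have := G.lt e he
    have h' := G.lt e' he'
    rcases le_total e.2.1 e'.2.1 with h | h
    · refine ⟨e.2, Finset.mem_filter.2 ⟨G.r e he, this, le_rfl, h, (hgt_r e this).le, ?_⟩⟩
      rw [← hgt_r e this]; exact (key _ this).le
    · have h'' := h'
      rw [hu] at h'
      refine ⟨e'.2, Finset.mem_filter.2 ⟨G.r e' he', h', h, le_rfl, ?_, (hgt_r e' h'').ge⟩⟩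
      rw [← hgt_r e' h'']; exact (key _ h').le
  obtain ⟨w, hw, hm⟩ := Finset.exists_min_image _ (fun p : Pt => p.1) hne
  rw [Finset.mem_filter] at hw
  exact ⟨w, hw.1, hw.2, fun z hz hz' => hm z (Finset.mem_filter.2 ⟨hz, hz'⟩)⟩

lemma fst_inj {V E} (G : Good V E) (hN : ∀ e ∈ E, ∀ f ∈ E, e ≠ f → ¬ Crs e f)
    {e e' f f' : Ed} {w : Pt} (he : e ∈ E) (hf : f ∈ E) (hn : Nxt E e e') (hn' : Nxt E f f')
    (hw : Fst V e e' w) (hw' : Fst V f f' w)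
    (h1 : hgt f w.1 < hgt e' w.1) (h2 : hgt e w.1 < hgt f' w.1) : e = f := by
  have c : ∀ g : Ed, Continuous (hgt g) := by intro g; unfold hgt; fun_prop
  have ev : ∀ᶠ x in nhdsWithin w.1 (Set.Iio w.1), x < w.1 ∧ hgt f x < hgt e' x ∧ hgt e x < hgt f' x
      ∧ e.1.1 < x ∧ f.1.1 < x := by
    have a1 := (c f).continuousAt.eventually_lt (c e').continuousAt h1
    have a2 := (c e).continuousAt.eventually_lt (c f').continuousAt h2
    have a3 := eventually_gt_nhds hw.2.1.1
    have a4 := eventually_gt_nhds hw'.2.1.1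
    filter_upwards [self_mem_nhdsWithin, nhdsWithin_le_nhds a1, nhdsWithin_le_nhds a2,
      nhdsWithin_le_nhds a3, nhdsWithin_le_nhds a4] with x b0 b1 b2 b3 b4
    exact ⟨b0, b1, b2, b3, b4⟩
  obtain ⟨x, x0, x1, x2, x3, x4⟩ := ev.exists
  rcases le_total (hgt e x) (hgt f x) with h | h
  · rcases intruder G hN he hf hn hw x3 x4 x0 hw'.2.1.2.1 h x1.le with h | h
    · exact h.symm
    · subst h; exact absurd x1 (lt_irrefl _)
  · rcases intruder G hN hf he hn' hw' x4 x3 x0 hw.2.1.2.1 h x2.le with h | h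
    · exact h
    · subst h; exact absurd x2 (lt_irrefl _)

lemma planar {V E} (G : Good V E) (hN : ∀ e ∈ E, ∀ f ∈ E, e ≠ f → ¬ Crs e f) :
    E.card ≤ 3 * V.card := by
  classical
  have hx : ∀ e : Ed, ∃ e' : Ed, ∃ w : Pt, (e ∈ E → (∃ f ∈ E, f.1 = e.1 ∧ slp e < slp f) →
      Nxt E e e' ∧ Fst V e e' w) := by
    intro e
    by_cases h : e ∈ E ∧ ∃ f ∈ E, f.1 = e.1 ∧ slp e < slp f
    · obtain ⟨he, f, hf, h1, h2⟩ := h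
      obtain ⟨e', h3, h4⟩ := Finset.exists_min_image (E.filter fun f => f.1 = e.1 ∧ slp e < slp f)
        slp ⟨f, Finset.mem_filter.2 ⟨hf, h1, h2⟩⟩
      rw [Finset.mem_filter] at h3
      have hn : Nxt E e e' := ⟨h3.1, h3.2.1, h3.2.2, fun g hg hg1 hg2 =>
        h4 g (Finset.mem_filter.2 ⟨hg, hg1, hg2⟩)⟩
      obtain ⟨w, hw⟩ := exists_fst G he hn
      exact ⟨e', w, fun _ _ => ⟨hn, hw⟩⟩
    · exact ⟨e, e.1, fun h1 h2 => absurd ⟨h1, h2⟩ h⟩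
  choose nx wt hnw using hx
  let T := E.filter fun e => ¬ ∃ f ∈ E, f.1 = e.1 ∧ slp e < slp f
  let A := E.filter fun e => (∃ f ∈ E, f.1 = e.1 ∧ slp e < slp f) ∧ (wt e).2 < hgt (nx e) (wt e).1
  let B := E.filter fun e => (∃ f ∈ E, f.1 = e.1 ∧ slp e < slp f) ∧ ¬ (wt e).2 < hgt (nx e) (wt e).1
  have hE : E ⊆ T ∪ (A ∪ B) := by
    intro e he
    simp only [T, A, B, Finset.mem_union, Finset.mem_filter]
    by_cases h1 : ∃ f ∈ E, f.1 = e.1 ∧ slp e < slp f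
    · by_cases h2 : (wt e).2 < hgt (nx e) (wt e).1
      · exact Or.inr (Or.inl ⟨he, h1, h2⟩)
      · exact Or.inr (Or.inr ⟨he, h1, h2⟩)
    · exact Or.inl ⟨he, h1⟩
  have hT : T.card ≤ V.card := by
    refine Finset.card_le_card_of_injOn (fun e => e.1) ?_ ?_
    · intro e he
      exact G.l e (Finset.mem_filter.1 he).1
    · intro e he f hf hef
      have he := Finset.mem_filter.1 he
      have hf := Finset.mem_filter.1 hf
      dsimp only at hef
      have h1 : ¬ slp e < slp f := fun h => he.2 ⟨f, hf.1, hef.symm, h⟩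
      have h2 : ¬ slp f < slp e := fun h => hf.2 ⟨e, he.1, hef, h⟩
      have h3 : slp e = slp f := le_antisymm (not_lt.1 h2) (not_lt.1 h1)
      refine G.same he.1 hf.1 (fun z => by unfold hgt; rw [h3, hef]) ?_ ?_
      · rw [hef]; exact G.lt f hf.1
      · rw [← hef]; exact G.lt e he.1
  have hlt : ∀ e ∈ E, (∃ f ∈ E, f.1 = e.1 ∧ slp e < slp f) → 
      hgt e (wt e).1 < hgt (nx e) (wt e).1 := by
    intro e he h
    obtain ⟨⟨_, hu, hsl, _⟩, hw⟩ := hnw e he h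
    have := hw.2.1.1
    unfold hgt; rw [hu]; nlinarith
  have hA : A.card ≤ V.card := by
    refine Finset.card_le_card_of_injOn wt ?_ ?_
    · intro e he
      have he := Finset.mem_filter.1 he
      exact (hnw e he.1 he.2.1).2.1
    · intro e he f hf hef
      have he := Finset.mem_filter.1 he
      have hf := Finset.mem_filter.1 hf
      have h1 := hnw e he.1 he.2.1
      have h2 := hnw f hf.1 hf.2.1
      have h3 := he.2.2
      have h4 := hf.2.2
      rw [← hef] at h2 h4
      exact fst_inj G hN he.1 hf.1 h1.1 h2.1 h1.2 h2.2 (lt_of_le_of_lt h2.2.2.1.2.2.2.1 h3)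
        (lt_of_le_of_lt h1.2.2.1.2.2.2.1 h4)
  have hB : B.card ≤ V.card := by
    refine Finset.card_le_card_of_injOn wt ?_ ?_
    · intro e he
      have he := Finset.mem_filter.1 he
      exact (hnw e he.1 he.2.1).2.1
    · intro e he f hf hef
      have he := Finset.mem_filter.1 he
      have hf := Finset.mem_filter.1 hf
      have h1 := hnw e he.1 he.2.1
      have h2 := hnw f hf.1 hf.2.1
      have h3 := he.2.2
      have h4 := hf.2.2
      have h5 := hlt e he.1 he.2.1
      have h6 := hlt f hf.1 hf.2.1
      rw [← hef] at h2 h4 h6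
      have h7 := h1.2.2.1.2.2.2.2
      have h8 := h2.2.2.1.2.2.2.2
      refine fst_inj G hN he.1 hf.1 h1.1 h2.1 h1.2 h2.2 ?_ ?_ <;> linarith
  have := Finset.card_le_card hE
  have := Finset.card_union_le T (A ∪ B)
  have := Finset.card_union_le A B
  omega

open Classical in
lemma cross_del {V E} (G : Good V E) :
    E.card ≤ 3 * V.card + ((E ×ˢ E).filter fun ef => ef.1 ≠ ef.2 ∧ Crs ef.1 ef.2).card := by
  set X := (E ×ˢ E).filter fun ef => ef.1 ≠ ef.2 ∧ Crs ef.1 ef.2 with hX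
  have hsub : E \ (X.image Prod.fst) ⊆ E := Finset.sdiff_subset
  have h1 : (E \ (X.image Prod.fst)).card ≤ 3 * V.card := by
    refine planar ⟨G.inj, fun e he => G.l e (hsub he), fun e he => G.r e (hsub he),
      fun e he => G.lt e (hsub he), fun e he => G.av e (hsub he)⟩ ?_
    intro e he f hf hne hc
    apply (Finset.mem_sdiff.1 he).2
    exact Finset.mem_image.2 ⟨(e, f), Finset.mem_filter.2
      ⟨Finset.mem_product.2 ⟨hsub he, hsub hf⟩, hne, hc⟩, rfl⟩
  have h2 := Finset.le_card_sdiff (X.image Prod.fst) E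
  have h3 : (X.image Prod.fst).card ≤ X.card := Finset.card_image_le
  omega

/-- weight of subset -/
def wgt (p : ℝ) (V S : Finset Pt) : ℝ := p ^ S.card * (1 - p) ^ (V.card - S.card)

open Classical in
lemma wsum (p : ℝ) (V A : Finset Pt) (hA : A ⊆ V) :
    ∑ S ∈ V.powerset, (if A ⊆ S then wgt p V S else 0) = p ^ A.card := by
  rw [← Finset.sum_filter]
  have h := Finset.sum_pow_mul_eq_add_pow p (1 - p) (V \ A)
  have h2 : ∑ S ∈ V.powerset.filter (fun S => A ⊆ S), wgt p V S
      = ∑ t ∈ (V \ A).powerset, p ^ A.card * (p ^ t.card * (1 - p) ^ ((V \ A).card - t.card)) := by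
    symm
    refine Finset.sum_bij' (fun t _ => A ∪ t) (fun S _ => S \ A) ?_ ?_ ?_ ?_ ?_
    · intro t ht
      have ht := Finset.mem_powerset.1 ht
      exact Finset.mem_filter.2 ⟨Finset.mem_powerset.2
        (Finset.union_subset hA (ht.trans Finset.sdiff_subset)), Finset.subset_union_left⟩
    · intro S hS
      have hS := Finset.mem_filter.1 hS
      exact Finset.mem_powerset.2 (Finset.sdiff_subset_sdiff (Finset.mem_powerset.1 hS.1) le_rfl)
    · intro t ht
      have ht := Finset.mem_powerset.1 ht
      have hd : Disjoint A t := (Finset.disjoint_sdiff (s := A) (t := V)).mono_right ht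
      exact Finset.union_sdiff_cancel_left hd
    · intro S hS
      have hS := Finset.mem_filter.1 hS
      exact Finset.union_sdiff_of_subset hS.2
    · intro t ht
      have ht := Finset.mem_powerset.1 ht
      have hd : Disjoint A t := (Finset.disjoint_sdiff (s := A) (t := V)).mono_right ht
      unfold wgt
      rw [Finset.card_union_of_disjoint hd, Finset.card_sdiff_of_subset hA, pow_add, mul_assoc,
        Nat.sub_sub]
  rw [h2, ← Finset.mul_sum, h]
  simp

open Classical in
lemma wsum_card {α : Type} (p : ℝ) (V : Finset Pt) (Y : Finset α) (F : α → Finset Pt)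
    (hF : ∀ y ∈ Y, F y ⊆ V) :
    ∑ S ∈ V.powerset, wgt p V S * ((Y.filter fun y => F y ⊆ S).card : ℝ)
      = ∑ y ∈ Y, p ^ (F y).card := by
  calc _ = ∑ S ∈ V.powerset, ∑ y ∈ Y, (if F y ⊆ S then wgt p V S else 0) := by
        refine Finset.sum_congr rfl fun S _ => ?_
        rw [Finset.card_filter, Nat.cast_sum, Finset.mul_sum]
        refine Finset.sum_congr rfl fun y _ => ?_
        split_ifs <;> simp
    _ = _ := by
        rw [Finset.sum_comm]
        exact Finset.sum_congr rfl fun y hy => wsum p V (F y) (hF y hy)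

open Classical in
lemma crossing_p {V E} (G : Good V E) (p : ℝ) (hp0 : 0 ≤ p) (hp1 : p ≤ 1) :
    p ^ 2 * E.card ≤ 3 * p * V.card +
      p ^ 4 * ((E ×ˢ E).filter fun ef => ef.1 ≠ ef.2 ∧ Crs ef.1 ef.2).card := by
  set X := (E ×ˢ E).filter fun ef => ef.1 ≠ ef.2 ∧ Crs ef.1 ef.2 with hX
  have hw : ∀ S, 0 ≤ wgt p V S := fun S => by
    unfold wgt
    have : 0 ≤ 1 - p := by linarith
    positivity
  let FE : Ed → Finset Pt := fun e => {e.1, e.2}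
  let FX : Ed × Ed → Finset Pt := fun x => {x.1.1, x.1.2, x.2.1, x.2.2}
  let FV : Pt → Finset Pt := fun v => {v}
  have key : ∀ S ∈ V.powerset, ((E.filter fun y => FE y ⊆ S).card : ℝ) ≤
      3 * ((V.filter fun y => FV y ⊆ S).card : ℝ) + ((X.filter fun y => FX y ⊆ S).card : ℝ) := by
    intro S hS
    have hS := Finset.mem_powerset.1 hS
    have hg : Good S (E.filter fun y => FE y ⊆ S) := by
      refine ⟨fun p hp q hq => G.inj p (hS hp) q (hS hq), ?_, ?_, ?_, ?_⟩
      · intro e he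
        exact (Finset.mem_filter.1 he).2 (by simp [FE])
      · intro e he
        exact (Finset.mem_filter.1 he).2 (by simp [FE])
      · intro e he
        exact G.lt e (Finset.mem_filter.1 he).1
      · intro e he w hw
        exact G.av e (Finset.mem_filter.1 he).1 w (hS hw)
    have h := cross_del hg
    have h1 : (V.filter fun y => FV y ⊆ S) = S := by
      ext v
      simp only [FV, Finset.mem_filter, Finset.singleton_subset_iff]
      exact ⟨fun h => h.2, fun h => ⟨hS h, h⟩⟩
    rw [h1]
    have h2 : (((E.filter fun y => FE y ⊆ S) ×ˢ (E.filter fun y => FE y ⊆ S)).filter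
        fun ef => ef.1 ≠ ef.2 ∧ Crs ef.1 ef.2) ⊆ (X.filter fun y => FX y ⊆ S) := by
      intro y hy
      simp only [Finset.mem_filter, Finset.mem_product, FE, FX, X, Finset.insert_subset_iff,
        Finset.singleton_subset_iff] at hy ⊢
      tauto
    have h3 := Finset.card_le_card h2
    have h4 := h.trans (Nat.add_le_add_left h3 _)
    exact_mod_cast h4
  have tot := Finset.sum_le_sum fun S hS => mul_le_mul_of_nonneg_left (key S hS) (hw S)
  simp only [mul_add, Finset.sum_add_distrib, mul_left_comm _ (3:ℝ), ← Finset.mul_sum] at tot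
  rw [wsum_card, wsum_card, wsum_card] at tot
  · have e1 : ∑ y ∈ E, p ^ (FE y).card = p ^ 2 * E.card := by
      rw [Finset.sum_congr rfl (g := fun _ => p ^ 2), Finset.sum_const, nsmul_eq_mul, mul_comm]
      intro e he
      have : e.1 ≠ e.2 := fun h => by
        have := G.lt e he
        rw [h] at this
        exact lt_irrefl _ this
      simp only [FE]
      rw [Finset.card_pair this]
    have e2 : ∑ y ∈ V, p ^ (FV y).card = p * V.card := by
      simp [FV, mul_comm]
    have e3 : ∑ y ∈ X, p ^ (FX y).card = p ^ 4 * X.card := by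
      rw [Finset.sum_congr rfl (g := fun _ => p ^ 4), Finset.sum_const, nsmul_eq_mul, mul_comm]
      rintro ⟨e, f⟩ hef
      simp only [X, Finset.mem_filter, Finset.mem_product] at hef
      obtain ⟨⟨he, hf⟩, hne, x, x1, x2, x3, x4, x5⟩ := hef
      have n1 : e.1 ≠ e.2 := fun h => by
        rw [h] at x1; linarith
      have n2 : f.1 ≠ f.2 := fun h => by
        rw [h] at x2; linarith
      have n3 : e.1 ≠ f.2 := fun h => by
        rw [h] at x1; linarith
      have n4 : e.2 ≠ f.1 := fun h => by
        rw [h] at x3; linarith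
      have n5 : e.1 ≠ f.1 := fun h => by
        refine hne (G.same he hf (hgt_eq e f x1.ne ?_ x5) (by linarith) (by linarith))
        rw [hgt_l, h, hgt_l]
      have n6 : e.2 ≠ f.2 := fun h => by
        refine hne (G.same he hf (hgt_eq e f x3.ne x5 ?_) (by linarith) (by linarith))
        rw [hgt_r e (G.lt e he), h, hgt_r f (G.lt f hf)]
      have : (FX (e, f)).card = 4 := by
        simp only [FX]
        rw [Finset.card_insert_of_notMem, Finset.card_insert_of_notMem, Finset.card_pair n2]
        · simp [n4, n6]
        · simp [n1, n3, n5]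
      rw [this]
    rw [e1, e2, e3] at tot
    linarith
  · intro y hy
    have := Finset.mem_product.1 (Finset.mem_filter.1 hy).1
    simp only [FX, Finset.insert_subset_iff, Finset.singleton_subset_iff]
    exact ⟨G.l _ this.1, G.r _ this.1, G.l _ this.2, G.r _ this.2⟩
  · intro y hy
    simpa [FV] using hy
  · intro y hy
    simp only [FE, Finset.insert_subset_iff, Finset.singleton_subset_iff]
    exact ⟨G.l _ hy, G.r _ hy⟩

open Classical in
lemma crossing {V E} (G : Good V E) (h : 6 * (V.card : ℝ) ≤ E.card) :
    (E.card : ℝ) ^ 3 ≤ 72 * (V.card : ℝ) ^ 2 *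
      ((E ×ˢ E).filter fun ef => ef.1 ≠ ef.2 ∧ Crs ef.1 ef.2).card := by
  rcases Nat.eq_zero_or_pos E.card with h0 | h0
  · rw [h0]; simp; positivity
  have hV : 0 < V.card := by
    obtain ⟨e, he⟩ := Finset.card_pos.1 h0
    exact Finset.card_pos.2 ⟨e.1, G.l e he⟩
  have hE' : (0:ℝ) < E.card := by exact_mod_cast h0
  have hV' : (0:ℝ) < V.card := by exact_mod_cast hV
  have := crossing_p G (6 * V.card / E.card) (by positivity) ((div_le_one hE').2 h)
  set X : ℝ := (((E ×ˢ E).filter fun ef => ef.1 ≠ ef.2 ∧ Crs ef.1 ef.2).card : ℝ) with hX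
  set v : ℝ := (V.card : ℝ)
  set m : ℝ := (E.card : ℝ)
  have h1 : (6 * v / m) ^ 2 * m = 36 * v ^ 2 / m := by field_simp; ring
  have h2 : 3 * (6 * v / m) * v = 18 * v ^ 2 / m := by field_simp; ring
  have h3 : (6 * v / m) ^ 4 * X = 1296 * v ^ 4 * X / m ^ 4 := by field_simp; ring
  rw [h1, h2, h3] at this
  have h4 : 18 * v ^ 2 / m ≤ 1296 * v ^ 4 * X / m ^ 4 := by
    have : 36 * v ^ 2 / m = 18 * v ^ 2 / m + 18 * v ^ 2 / m := by ring
    linarith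
  rw [div_le_div_iff₀ hE' (by positivity)] at h4
  have h5 : (18 * v ^ 2 * m) * m ^ 3 ≤ (18 * v ^ 2 * m) * (72 * v ^ 2 * X) := by linarith
  exact le_of_mul_le_mul_left h5 (by positivity)

def OnL (l p : Pt) : Prop := p.2 = l.1 * p.1 + l.2

open Classical in
def cnt (S : Finset Pt) (l : Pt) : ℕ := (S.filter (OnL l)).card

lemma onL_uniq {l k p q : Pt} (h : p.1 ≠ q.1) (h1 : OnL l p) (h2 : OnL l q) (h3 : OnL k p)
    (h4 : OnL k q) : l = k := by
  unfold OnL at *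
  have h5 : (l.1 - k.1) * (p.1 - q.1) = 0 := by linear_combination h3 - h1 - h4 + h2
  have h6 : l.1 = k.1 := by
    rcases mul_eq_zero.1 h5 with h | h'
    · linarith
    · exact absurd (sub_eq_zero.1 h') h
  refine Prod.ext h6 ?_
  rw [h6] at h1
  linarith

lemma hgt_on {l : Pt} {e : Ed} (h : e.1.1 < e.2.1) (h1 : OnL l e.1) (h2 : OnL l e.2) (x : ℝ) :
    hgt e x = l.1 * x + l.2 := by
  have hs : slp e = l.1 := by
    unfold slp
    unfold OnL at *
    rw [div_eq_iff (by linarith), h1, h2]; ring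
  unfold hgt
  rw [hs]
  unfold OnL at h1
  linarith

def EdL (S : Finset Pt) (l : Pt) (e : Ed) : Prop :=
  e.1.1 < e.2.1 ∧ OnL l e.1 ∧ OnL l e.2 ∧ ∀ w ∈ S, OnL l w → e.1.1 < w.1 → ¬ w.1 < e.2.1

open Classical in
def edl (S : Finset Pt) (l : Pt) : Finset Ed := (S ×ˢ S).filter (EdL S l)

open Classical in
def edA (S L : Finset Pt) : Finset Ed := L.biUnion (edl S)

lemma mem_edA {S L : Finset Pt} {e : Ed} :
    e ∈ edA S L ↔ ∃ l ∈ L, e.1 ∈ S ∧ e.2 ∈ S ∧ EdL S l e := by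
  classical
  simp [edA, edl, and_assoc]

lemma good_edA {S L : Finset Pt} (inj : ∀ p ∈ S, ∀ q ∈ S, p.1 = q.1 → p = q) :
    Good S (edA S L) := by
  refine ⟨inj, ?_, ?_, ?_, ?_⟩
  · intro e he
    obtain ⟨l, hl, h1, h2, h3⟩ := mem_edA.1 he
    exact h1
  · intro e he
    obtain ⟨l, hl, h1, h2, h3⟩ := mem_edA.1 he
    exact h2
  · intro e he
    obtain ⟨l, hl, h1, h2, h3⟩ := mem_edA.1 he
    exact h3.1
  · intro e he w hw w1 w2 hh
    obtain ⟨l, hl, h1, h2, h3, h4, h5, h6⟩ := mem_edA.1 he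
    rw [hgt_on h3 h4 h5] at hh
    exact h6 w hw hh.symm w1 w2

lemma card_edl {S : Finset Pt} (inj : ∀ p ∈ S, ∀ q ∈ S, p.1 = q.1 → p = q) (l : Pt) :
    cnt S l ≤ (edl S l).card + 1 := by
  classical
  unfold cnt
  rcases (S.filter (OnL l)).eq_empty_or_nonempty with h0 | h0
  · rw [h0]; simp
  obtain ⟨m, hm, hmax⟩ := Finset.exists_max_image _ (fun p : Pt => p.1) h0
  have hsub : (S.filter (OnL l)).erase m ⊆ (edl S l).image Prod.fst := by
    intro u hu
    rw [Finset.mem_erase] at hu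
    have hum := hmax u hu.2
    have huS := Finset.mem_filter.1 hu.2
    have hmS := Finset.mem_filter.1 hm
    have hlt : u.1 < m.1 := lt_of_le_of_ne hum fun h => hu.1 (inj u huS.1 m hmS.1 h)
    obtain ⟨v, hv, hmin⟩ := Finset.exists_min_image ((S.filter (OnL l)).filter fun v => u.1 < v.1)
      (fun p : Pt => p.1) ⟨m, Finset.mem_filter.2 ⟨hm, hlt⟩⟩
    have hv := Finset.mem_filter.1 hv
    have hvS := Finset.mem_filter.1 hv.1
    refine Finset.mem_image.2 ⟨(u, v), Finset.mem_filter.2 ⟨Finset.mem_product.2 ⟨huS.1, hvS.1⟩,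
      hv.2, huS.2, hvS.2, ?_⟩, rfl⟩
    intro w hw hwl h1 h2
    have := hmin w (Finset.mem_filter.2 ⟨Finset.mem_filter.2 ⟨hw, hwl⟩, h1⟩)
    exact absurd h2 (not_lt.2 this)
  have h1 := Finset.card_le_card hsub
  have h2 : ((edl S l).image Prod.fst).card ≤ (edl S l).card := Finset.card_image_le
  rw [Finset.card_erase_of_mem hm] at h1
  omega

lemma card_edA {S L : Finset Pt} (inj : ∀ p ∈ S, ∀ q ∈ S, p.1 = q.1 → p = q) (k : ℕ)
    (hk : ∀ l ∈ L, k ≤ cnt S l) : L.card * (k - 1) ≤ (edA S L).card := by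
  classical
  unfold edA
  rw [Finset.card_biUnion]
  · rw [← smul_eq_mul, ← Finset.sum_const]
    refine Finset.sum_le_sum fun l hl => ?_
    have := card_edl inj l
    have := hk l hl
    omega
  · intro l _ l' _ hne
    refine Finset.disjoint_left.2 ?_
    intro e he he'
    have h1 := (Finset.mem_filter.1 he).2
    have h2 := (Finset.mem_filter.1 he').2
    exact hne (onL_uniq h1.1.ne h1.2.1 h1.2.2.1 h2.2.1 h2.2.2.1)

open Classical in
lemma card_cr {S L : Finset Pt} (inj : ∀ p ∈ S, ∀ q ∈ S, p.1 = q.1 → p = q) :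
    ((edA S L ×ˢ edA S L).filter fun ef => ef.1 ≠ ef.2 ∧ Crs ef.1 ef.2).card ≤ L.card ^ 2 := by
  have G := good_edA (L := L) inj
  have hx : ∀ e : Ed, ∃ l : Pt, e ∈ edA S L → l ∈ L ∧ EdL S l e := by
    intro e
    by_cases h : e ∈ edA S L
    · obtain ⟨l, hl, h1, h2, h3⟩ := mem_edA.1 h
      exact ⟨l, fun _ => ⟨hl, h3⟩⟩
    · exact ⟨0, fun h' => absurd h' h⟩
  choose ln hln using hx
  have same : ∀ e ∈ edA S L, ∀ f ∈ edA S L, ln e = ln f → e.1.1 < f.2.1 → f.1.1 < e.2.1 → e = f := by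
    intro e he f hf h h1 h2
    have a := (hln e he).2
    have b := (hln f hf).2
    refine G.same he hf (fun z => ?_) h1 h2
    rw [hgt_on a.1 a.2.1 a.2.2.1, hgt_on b.1 b.2.1 b.2.2.1, h]
  rw [sq, ← Finset.card_product]
  refine Finset.card_le_card_of_injOn (fun ef => (ln ef.1, ln ef.2)) ?_ ?_
  · intro ef hef
    have h := Finset.mem_product.1 (Finset.mem_filter.1 hef).1
    exact Finset.mem_product.2 ⟨(hln _ h.1).1, (hln _ h.2).1⟩
  · rintro ⟨e, f⟩ hef ⟨e', f'⟩ hef' heq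
    simp only [Finset.coe_filter, Finset.mem_product, Set.mem_ofPred_eq] at hef hef'
    simp only [Prod.mk.injEq] at heq
    obtain ⟨⟨he, hf⟩, hne, x, x1, x2, x3, x4, x5⟩ := hef
    obtain ⟨⟨he', hf'⟩, hne', y, y1, y2, y3, y4, y5⟩ := hef'
    have a := (hln e he).2
    have b := (hln f hf).2
    have a' := (hln e' he').2
    have b' := (hln f' hf').2
    rw [hgt_on a.1 a.2.1 a.2.2.1, hgt_on b.1 b.2.1 b.2.2.1] at x5
    rw [hgt_on a'.1 a'.2.1 a'.2.2.1, hgt_on b'.1 b'.2.1 b'.2.2.1, ← heq.1, ← heq.2] at y5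
    have hxy : x = y := by
      by_contra hc
      have : ln e = ln f := onL_uniq (p := (x, (ln e).1 * x + (ln e).2))
        (q := (y, (ln e).1 * y + (ln e).2)) hc rfl rfl x5 y5
      exact hne (same e he f hf this (by linarith) (by linarith))
    subst hxy
    rw [same e he e' he' heq.1 (by linarith) (by linarith),
      same f hf f' hf' heq.2 (by linarith) (by linarith)]

lemma rich_bound {S L : Finset Pt} (inj : ∀ p ∈ S, ∀ q ∈ S, p.1 = q.1 → p = q) (k : ℕ)
    (hk2 : 2 ≤ k) (hk : ∀ l ∈ L, k ≤ cnt S l) :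
    (L.card : ℝ) ≤ 12 * S.card / k + 576 * (S.card : ℝ) ^ 2 / (k : ℝ) ^ 3 := by
  classical
  have G := good_edA (L := L) inj
  have h1 : (L.card : ℝ) * k ≤ 2 * (edA S L).card := by
    have h := card_edA inj k hk
    have h' : L.card * k ≤ 2 * (L.card * (k - 1)) := by
      obtain ⟨j, rfl⟩ := Nat.exists_eq_add_of_le hk2
      have : 2 + j - 1 = j + 1 := by omega
      rw [this]; nlinarith
    exact_mod_cast h'.trans (Nat.mul_le_mul_left 2 h)
  have hk0 : (0:ℝ) < k := by
    have : 0 < k := by omega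
    exact_mod_cast this
  have hN : (0:ℝ) ≤ S.card := Nat.cast_nonneg _
  have hm : (0:ℝ) ≤ L.card := Nat.cast_nonneg _
  rcases lt_or_ge ((edA S L).card : ℝ) (6 * S.card) with h | h
  · have : (L.card : ℝ) ≤ 12 * S.card / k := by
      rw [le_div_iff₀ hk0]; linarith
    have : 0 ≤ 576 * (S.card : ℝ) ^ 2 / (k : ℝ) ^ 3 := by positivity
    linarith
  · have h2 := crossing G h
    have h3 : (((edA S L ×ˢ edA S L).filter fun ef => ef.1 ≠ ef.2 ∧ Crs ef.1 ef.2).card : ℝ)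
      ≤ (L.card : ℝ) ^ 2 := by exact_mod_cast card_cr (L := L) inj
    have h4 : ((L.card : ℝ) * k) ^ 3 ≤ (2 * (edA S L).card) ^ 3 :=
      pow_le_pow_left₀ (by positivity) h1 3
    have h5 : (L.card : ℝ) ^ 3 * k ^ 3 ≤ 576 * (S.card : ℝ) ^ 2 * (L.card : ℝ) ^ 2 := by
      have := mul_le_mul_of_nonneg_left h3 (show 0 ≤ 72 * (S.card : ℝ) ^ 2 by positivity)
      nlinarith
    have h6 : (L.card : ℝ) ≤ 576 * (S.card : ℝ) ^ 2 / (k : ℝ) ^ 3 := by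
      rcases hm.eq_or_lt with h0 | h0
      · rw [← h0]; positivity
      · rw [le_div_iff₀ (by positivity)]
        have : (L.card : ℝ) ^ 2 * (L.card * k ^ 3) ≤ (L.card : ℝ) ^ 2 * (576 * (S.card : ℝ) ^ 2) := by
          linarith
        exact le_of_mul_le_mul_left this (by positivity)
    have : 0 ≤ 12 * (S.card : ℝ) / k := by positivity
    linarith

lemma sum_inv_sq (C J : ℕ) (hC : 1 ≤ C) (hJ : C ≤ J) :
    ∑ j ∈ Finset.Ioc C J, 1 / (j : ℝ) ^ 2 ≤ 1 / (C : ℝ) - 1 / (J : ℝ) := by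
  induction J, hJ using Nat.le_induction with
  | base => simp
  | succ n hn ih =>
    rw [← Finset.insert_Ioc_right_eq_Ioc_add_one (by omega), Finset.sum_insert (by simp)]
    have hn0 : (0:ℝ) < n := by
      have : 0 < n := by omega
      exact_mod_cast this
    have : 1 / ((n + 1 : ℕ) : ℝ) ^ 2 ≤ 1 / (n : ℝ) - 1 / ((n + 1 : ℕ) : ℝ) := by
      push_cast
      rw [div_sub_div _ _ (by positivity) (by positivity), div_le_div_iff₀ (by positivity) (by positivity)]
      nlinarith
    linarith

lemma sq_layer (C k : ℕ) (h : C ≤ k) :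
    ((k : ℝ)) ^ 2 ≤ (C : ℝ) ^ 2 + ∑ j ∈ Finset.Ioc C k, 2 * (j : ℝ) := by
  induction k, h using Nat.le_induction with
  | base => simp
  | succ n hn ih =>
    rw [← Finset.insert_Ioc_right_eq_Ioc_add_one (by omega), Finset.sum_insert (by simp)]
    push_cast
    nlinarith

lemma core {S L : Finset Pt} (inj : ∀ p ∈ S, ∀ q ∈ S, p.1 = q.1 → p = q)
    (h1 : ∀ l ∈ L, 40000 ≤ cnt S l) (h2 : ∀ l ∈ L, (cnt S l : ℝ) ≤ S.card / 1000) :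
    ∑ l ∈ L, (cnt S l : ℝ) ^ 2 ≤ (S.card : ℝ) ^ 2 / 8 := by
  classical
  rcases L.eq_empty_or_nonempty with h0 | ⟨l0, hl0⟩
  · rw [h0]; simp; positivity
  set N : ℝ := (S.card : ℝ) with hN
  have hN0 : 0 ≤ N := Nat.cast_nonneg _
  set J : ℕ := ⌊N / 1000⌋₊ with hJ
  have hJN : (J : ℝ) ≤ N / 1000 := Nat.floor_le (by positivity)
  have hcJ : ∀ l ∈ L, cnt S l ≤ J := fun l hl => Nat.le_floor (h2 l hl)
  have hCJ : 40000 ≤ J := (h1 l0 hl0).trans (hcJ l0 hl0)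
  have hCJ' : (40000:ℝ) ≤ J := by exact_mod_cast hCJ
  have step1 : ∀ l ∈ L, (cnt S l : ℝ) ^ 2 ≤ (40000:ℝ) ^ 2 +
      ∑ j ∈ Finset.Ioc 40000 J, (if j ≤ cnt S l then 2 * (j : ℝ) else 0) := by
    intro l hl
    have h := sq_layer 40000 (cnt S l) (h1 l hl)
    rw [← Finset.sum_filter]
    have : (Finset.Ioc 40000 J).filter (fun j => j ≤ cnt S l) = Finset.Ioc 40000 (cnt S l) := by
      ext j
      have := hcJ l hl
      simp only [Finset.mem_filter, Finset.mem_Ioc]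
      omega
    rw [this]
    exact_mod_cast h
  have step2 := Finset.sum_le_sum step1
  rw [Finset.sum_add_distrib, Finset.sum_comm, Finset.sum_const, nsmul_eq_mul] at step2
  have step3 : ∀ j ∈ Finset.Ioc 40000 J, ∑ l ∈ L, (if j ≤ cnt S l then 2 * (j : ℝ) else 0) ≤
      24 * N + 1152 * N ^ 2 * (1 / (j : ℝ) ^ 2) := by
    intro j hj
    have hj := Finset.mem_Ioc.1 hj
    rw [← Finset.sum_filter, Finset.sum_const, nsmul_eq_mul]
    have hb := rich_bound (L := L.filter fun l => j ≤ cnt S l) inj j (by omega)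
      (fun l hl => (Finset.mem_filter.1 hl).2)
    have hj0 : (0:ℝ) < j := by
      have : 0 < j := by omega
      exact_mod_cast this
    have := mul_le_mul_of_nonneg_right hb (show 0 ≤ 2 * (j:ℝ) by positivity)
    refine this.trans (le_of_eq ?_)
    rw [← hN]
    field_simp
    ring
  have step4 := Finset.sum_le_sum step3
  rw [Finset.sum_add_distrib, Finset.sum_const, nsmul_eq_mul, ← Finset.mul_sum, Nat.card_Ioc] at step4
  have hs := sum_inv_sq 40000 J (by norm_num) hCJ
  have hb := rich_bound (L := L) inj 40000 (by norm_num) h1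
  have hJ1 : ((J - 40000 : ℕ) : ℝ) ≤ J := by exact_mod_cast Nat.sub_le _ _
  have hJ2 : 0 ≤ 1 / (J : ℝ) := by positivity
  have hs' : ∑ j ∈ Finset.Ioc 40000 J, 1 / (j : ℝ) ^ 2 ≤ 1 / 40000 := by
    push_cast at hs
    linarith
  have a1 : 1152 * N ^ 2 * ∑ j ∈ Finset.Ioc 40000 J, 1 / (j : ℝ) ^ 2 ≤ 1152 * N ^ 2 * (1 / 40000) :=
    mul_le_mul_of_nonneg_left hs' (by positivity)
  have a2 : ((J - 40000 : ℕ) : ℝ) * (24 * N) ≤ (N / 1000) * (24 * N) :=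
    mul_le_mul_of_nonneg_right (hJ1.trans hJN) (by positivity)
  have a3 : (L.card : ℝ) * 40000 ^ 2 ≤ (12 * N / 40000 + 576 * N ^ 2 / 40000 ^ 3) * 40000 ^ 2 := by
    push_cast at hb
    exact mul_le_mul_of_nonneg_right hb (by positivity)
  have a4 : 40000 * N ≤ N / 1000 * N := mul_le_mul_of_nonneg_right (hCJ'.trans hJN) hN0
  nlinarith

def shr (t : ℝ) (p : Pt) : Pt := (p.1 + t * p.2, p.2)

lemma shr_inj (t : ℝ) : Function.Injective (shr t) := by
  intro p q h
  simp only [shr, Prod.mk.injEq] at h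
  refine Prod.ext ?_ h.2
  have h1 := h.1
  rw [h.2] at h1
  linarith

lemma exists_shr (S : Finset Pt) : ∃ t : ℝ, ∀ p ∈ S, ∀ q ∈ S, (shr t p).1 = (shr t q).1 → p = q := by
  classical
  let bad : Finset ℝ := (S ×ˢ S).image fun pq => (pq.2.1 - pq.1.1) / (pq.1.2 - pq.2.2)
  obtain ⟨t, ht⟩ := Infinite.exists_notMem_finset bad
  refine ⟨t, fun p hp q hq h => ?_⟩
  simp only [shr] at h
  by_cases h2 : p.2 = q.2
  · rw [h2] at h
    exact Prod.ext (by linarith) h2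
  · exfalso
    apply ht
    refine Finset.mem_image.2 ⟨(p, q), Finset.mem_product.2 ⟨hp, hq⟩, ?_⟩
    have : p.2 - q.2 ≠ 0 := sub_ne_zero.2 h2
    rw [div_eq_iff this]
    dsimp only
    linarith

def lin (t : ℝ) (pq : Ed) : Pt :=
  ((pq.2.2 - pq.1.2) / ((shr t pq.2).1 - (shr t pq.1).1),
    pq.1.2 - (pq.2.2 - pq.1.2) / ((shr t pq.2).1 - (shr t pq.1).1) * (shr t pq.1).1)

lemma mem_lin (t : ℝ) (p q w : Pt) (h : (shr t p).1 ≠ (shr t q).1) :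
    w ∈ lineThrough p q ↔ OnL (lin t (p, q)) (shr t w) := by
  have h0 : (q.1 + t * q.2) - (p.1 + t * p.2) ≠ 0 := by
    simp only [shr] at h
    exact sub_ne_zero.2 h.symm
  unfold lineThrough
  rw [SetLike.mem_coe, mem_affineSpan_pair_iff_exists_lineMap_eq]
  simp only [AffineMap.lineMap_apply, OnL, lin, shr, vsub_eq_sub, vadd_eq_add]
  constructor
  · rintro ⟨r, rfl⟩
    simp only [Prod.fst_add, Prod.snd_add, Prod.smul_fst, Prod.smul_snd, Prod.fst_sub, Prod.snd_sub,
      smul_eq_mul]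
    have h1 : (q.2 - p.2) / ((q.1 + t * q.2) - (p.1 + t * p.2)) *
        ((q.1 + t * q.2) - (p.1 + t * p.2)) = q.2 - p.2 := div_mul_cancel₀ _ h0
    linear_combination (-r) * h1
  · intro hw
    refine ⟨((w.1 + t * w.2) - (p.1 + t * p.2)) / ((q.1 + t * q.2) - (p.1 + t * p.2)), ?_⟩
    have h2 : w.2 = p.2 + ((w.1 + t * w.2) - (p.1 + t * p.2)) /
        ((q.1 + t * q.2) - (p.1 + t * p.2)) * (q.2 - p.2) := by
      rw [eq_comm]
      refine Eq.trans ?_ hw.symm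
      ring
    have h1 : ((w.1 + t * w.2) - (p.1 + t * p.2)) /
        ((q.1 + t * q.2) - (p.1 + t * p.2)) * ((q.1 + t * q.2) - (p.1 + t * p.2)) =
        ((w.1 + t * w.2) - (p.1 + t * p.2)) := div_mul_cancel₀ _ h0
    generalize ((w.1 + t * w.2) - (p.1 + t * p.2)) /
        ((q.1 + t * q.2) - (p.1 + t * p.2)) = r at h1 h2
    refine Prod.ext ?_ ?_
    · simp only [Prod.fst_add, Prod.smul_fst, Prod.fst_sub, smul_eq_mul]
      linear_combination h1 + t * h2
    · simp only [Prod.snd_add, Prod.smul_snd, Prod.snd_sub, smul_eq_mul]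
      linarith

open Classical in
lemma rich_eq (t : ℝ) (S : Finset Pt) (p q : Pt) (h : (shr t p).1 ≠ (shr t q).1) :
    richness S (lineThrough p q) = cnt (S.image (shr t)) (lin t (p, q)) := by
  unfold richness cnt
  rw [Finset.filter_image, Finset.card_image_of_injective _ (shr_inj t), ← Set.ncard_coe_finset]
  congr 1
  ext w
  simp only [Set.mem_inter_iff, Finset.coe_filter, Set.mem_ofPred_eq, mem_lin t p q w h,
    Finset.mem_coe]

open scoped Classical in
/-- There is `K₁ > 0` so that at most `n²/2` of the `n²` bichromatic pairs induce a
line of richness between `1/K₁` and `K₁ · n`. -/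
theorem badpairs :
    ∃ K₁ : ℝ, 0 < K₁ ∧ ∀ (P Q : Finset (ℝ × ℝ)) (n : ℕ),
      Disjoint P Q → P.card = n → Q.card = n →
      ((((P ×ˢ Q).filter fun pq =>
          1 / K₁ ≤ (richness (P ∪ Q) (lineThrough pq.1 pq.2) : ℝ) ∧
          (richness (P ∪ Q) (lineThrough pq.1 pq.2) : ℝ) ≤ K₁ * (n : ℝ)).card : ℝ)) ≤
        (n : ℝ) ^ 2 / 2 := by
  
  refine ⟨1 / 40000, by norm_num, ?_⟩
  intro P Q n hd hP hQ
  obtain ⟨t, ht⟩ := exists_shr (P ∪ Q)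
  set B := (P ×ˢ Q).filter fun pq =>
          1 / (1 / 40000 : ℝ) ≤ (richness (P ∪ Q) (lineThrough pq.1 pq.2) : ℝ) ∧
          (richness (P ∪ Q) (lineThrough pq.1 pq.2) : ℝ) ≤ 1 / 40000 * (n : ℝ) with hB
  set S := (P ∪ Q).image (shr t) with hS
  have hSc : (S.card : ℝ) = 2 * n := by
    rw [hS, Finset.card_image_of_injective _ (shr_inj t), Finset.card_union_of_disjoint hd, hP, hQ]
    push_cast; ring
  have inj : ∀ p ∈ S, ∀ q ∈ S, p.1 = q.1 → p = q := by
    intro p hp q hq h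
    obtain ⟨p', hp', rfl⟩ := Finset.mem_image.1 hp
    obtain ⟨q', hq', rfl⟩ := Finset.mem_image.1 hq
    rw [ht p' hp' q' hq' h]
  have hBm : ∀ pq ∈ B, pq.1 ∈ P ∪ Q ∧ pq.2 ∈ P ∪ Q ∧ (shr t pq.1).1 ≠ (shr t pq.2).1 ∧
      40000 ≤ cnt S (lin t pq) ∧ (cnt S (lin t pq) : ℝ) ≤ S.card / 1000 := by
    intro pq hpq
    obtain ⟨h1, h2, h3⟩ := Finset.mem_filter.1 hpq
    have h1 := Finset.mem_product.1 h1
    have m1 : pq.1 ∈ P ∪ Q := Finset.mem_union_left _ h1.1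
    have m2 : pq.2 ∈ P ∪ Q := Finset.mem_union_right _ h1.2
    have hne : (shr t pq.1).1 ≠ (shr t pq.2).1 := by
      intro h
      have := ht _ m1 _ m2 h
      exact Finset.disjoint_left.1 hd h1.1 (this ▸ h1.2)
    rw [rich_eq t _ _ _ hne] at h2 h3
    refine ⟨m1, m2, hne, ?_, ?_⟩
    · have : (40000 : ℝ) ≤ cnt S (lin t pq) := by
        refine le_trans (by norm_num) h2
      exact_mod_cast this
    · refine le_trans h3 ?_
      rw [hSc]
      have : (0:ℝ) ≤ n := Nat.cast_nonneg _
      linarith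
  have hcore := core (S := S) (L := B.image (lin t)) inj
    (by
      intro l hl
      obtain ⟨pq, hpq, rfl⟩ := Finset.mem_image.1 hl
      exact (hBm pq hpq).2.2.2.1)
    (by
      intro l hl
      obtain ⟨pq, hpq, rfl⟩ := Finset.mem_image.1 hl
      exact (hBm pq hpq).2.2.2.2)
  have hfib : (B.card : ℝ) ≤ ∑ l ∈ B.image (lin t), (cnt S l : ℝ) ^ 2 := by
    rw [Finset.card_eq_sum_card_image (lin t) B, Nat.cast_sum]
    refine Finset.sum_le_sum fun l hl => ?_
    have : (B.filter fun pq => lin t pq = l).card ≤ cnt S l ^ 2 := by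
      unfold cnt
      rw [sq, ← Finset.card_product]
      refine Finset.card_le_card_of_injOn (fun pq => (shr t pq.1, shr t pq.2)) ?_ ?_
      · intro pq hpq
        obtain ⟨h1, rfl⟩ := Finset.mem_filter.1 hpq
        obtain ⟨m1, m2, hne, -⟩ := hBm pq h1
        refine Finset.mem_product.2 ⟨Finset.mem_filter.2 ⟨Finset.mem_image_of_mem _ m1, ?_⟩,
          Finset.mem_filter.2 ⟨Finset.mem_image_of_mem _ m2, ?_⟩⟩
        · exact (mem_lin t pq.1 pq.2 pq.1 hne).1 (left_mem_affineSpan_pair ℝ _ _)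
        · exact (mem_lin t pq.1 pq.2 pq.2 hne).1 (right_mem_affineSpan_pair ℝ _ _)
      · intro a _ b _ hab
        simp only [Prod.mk.injEq] at hab
        exact Prod.ext (shr_inj t hab.1) (shr_inj t hab.2)
    exact_mod_cast this
  rw [hSc] at hcore
  have : (B.card : ℝ) ≤ (n : ℝ) ^ 2 / 2 := by
    refine hfib.trans (hcore.trans (le_of_eq ?_))
    ring
  exact this
end
end

section
/- Bichromatic two-extremes lemma: There are absolute constants C > 0 and K₂ > 0 with the following property. Let P and Q be disjoint finite sets of points in the Euclidean plane ℝ² with |P| = |Q| = n. Then at least one of the following holds: (A) the number of bichromatic induced lines of (P, Q) is at least C · n²; or (B) there is a line ℓ incident on at least K₂ · n points of P and at least K₂ · n points of Q. -/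
open Set

noncomputable section

/-! ### Basic facts on lines -/

open Classical in
/-- Number of points of `S` on `L`. -/
def rch (S : Finset (ℝ × ℝ)) (L : Set (ℝ × ℝ)) : ℕ := (S.filter (fun p => p ∈ L)).card

theorem ncard_eq_rch (S : Finset (ℝ × ℝ)) (L : Set (ℝ × ℝ)) :
    ((S : Set (ℝ × ℝ)) ∩ L).ncard = rch S L := by
  classical
  unfold rch
  rw [← Set.ncard_coe_finset]
  congr 1
  ext p
  simp

theorem left_mem_lineThrough (p q : ℝ × ℝ) : p ∈ lineThrough p q :=
  left_mem_affineSpan_pair ℝ p q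

theorem right_mem_lineThrough (p q : ℝ × ℝ) : q ∈ lineThrough p q :=
  right_mem_affineSpan_pair ℝ p q

theorem mem_lineThrough {p q v : ℝ × ℝ} (h : p ≠ q) :
    v ∈ lineThrough p q ↔ (q.2 - p.2) * (v.1 - p.1) = (q.1 - p.1) * (v.2 - p.2) := by
  unfold lineThrough
  have hv : v = (v -ᵥ p) +ᵥ p := (vsub_vadd v p).symm
  rw [SetLike.mem_coe, hv, vadd_left_mem_affineSpan_pair, ← hv]
  constructor
  · rintro ⟨r, hr⟩
    have h1 := congrArg Prod.fst hr
    have h2 := congrArg Prod.snd hr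
    simp at h1 h2
    rw [← h1, ← h2]
    ring
  · intro hv
    by_cases h1 : q.1 - p.1 = 0
    · have h2 : q.2 - p.2 ≠ 0 := by
        intro h2
        exact h (Prod.ext (by linarith) (by linarith))
      refine ⟨(v.2 - p.2) / (q.2 - p.2), ?_⟩
      have : v.1 - p.1 = 0 := by
        rw [h1, zero_mul] at hv
        exact (mul_eq_zero.mp hv).resolve_left h2
      ext
      · simp [h1, this]
      · simp; field_simp
    · refine ⟨(v.1 - p.1) / (q.1 - p.1), ?_⟩
      ext
      · simp; field_simp
      · simp; field_simp; linarith

theorem IsLine.eqn {L : Set (ℝ × ℝ)} (h : IsLine L) :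
    ∃ a b c : ℝ, (a ≠ 0 ∨ b ≠ 0) ∧ ∀ v, v ∈ L ↔ a * v.1 + b * v.2 = c := by
  obtain ⟨p, q, hpq, rfl⟩ := h
  refine ⟨q.2 - p.2, -(q.1 - p.1), (q.2 - p.2) * p.1 - (q.1 - p.1) * p.2, ?_, ?_⟩
  · by_contra! hh
    exact hpq (Prod.ext (by linarith [hh.2]) (by linarith [hh.1]))
  · intro v
    rw [mem_lineThrough hpq]
    constructor <;> intro h <;> linarith

theorem eq_lineThrough {L : Set (ℝ × ℝ)} (h : IsLine L) {p q : ℝ × ℝ} (hpq : p ≠ q)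
    (hp : p ∈ L) (hq : q ∈ L) : L = lineThrough p q := by
  obtain ⟨a, b, c, hab, hL⟩ := h.eqn
  rw [hL] at hp hq
  ext v
  rw [mem_lineThrough hpq, hL]
  have key : a * (q.1 - p.1) + b * (q.2 - p.2) = 0 := by linarith
  by_cases ha : a = 0
  · have hb : b ≠ 0 := by tauto
    subst ha
    have h2 : q.2 - p.2 = 0 := by
      have : b * (q.2 - p.2) = 0 := by linarith
      exact (mul_eq_zero.mp this).resolve_left hb
    have h1 : q.1 - p.1 ≠ 0 := fun h1 => hpq (Prod.ext (by linarith) (by linarith))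
    rw [h2]
    constructor
    · intro hv
      have : b * (v.2 - p.2) = 0 := by linarith
      have := (mul_eq_zero.mp this).resolve_left hb
      rw [this]; ring
    · intro hv
      have : (q.1 - p.1) * (v.2 - p.2) = 0 := by linarith
      have := (mul_eq_zero.mp this).resolve_left h1
      rw [show v.2 = p.2 by linarith]; linarith
  · have h1 : q.1 - p.1 = - b / a * (q.2 - p.2) := by field_simp; linarith
    have h2 : q.2 - p.2 ≠ 0 := by
      intro h2
      rw [h2, mul_zero] at h1
      exact hpq (Prod.ext (by linarith) (by linarith))
    rw [h1]
    constructor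
    · intro hv
      have : v.1 - p.1 = -b / a * (v.2 - p.2) := by field_simp; linarith
      rw [this]; ring
    · intro hv
      have : (q.2 - p.2) * ((v.1 - p.1) - (-b / a * (v.2 - p.2))) = 0 := by linarith
      have := (mul_eq_zero.mp this).resolve_left h2
      field_simp at this
      linarith

theorem line_unique {L L' : Set (ℝ × ℝ)} (h : IsLine L) (h' : IsLine L') {p q : ℝ × ℝ}
    (hpq : p ≠ q) (hp : p ∈ L) (hq : q ∈ L) (hp' : p ∈ L') (hq' : q ∈ L') : L = L' := by
  rw [eq_lineThrough h hpq hp hq, eq_lineThrough h' hpq hp' hq']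

theorem isLine_vert (m : ℝ) : IsLine {v : ℝ × ℝ | v.1 = m} := by
  refine ⟨(m, 0), (m, 1), by simp, ?_⟩
  ext v
  rw [mem_lineThrough (by simp)]
  simp
  constructor <;> intro h <;> linarith

theorem isLine_slope (s b : ℝ) : IsLine {v : ℝ × ℝ | v.2 - s * v.1 = b} := by
  refine ⟨(0, b), (1, s + b), by simp, ?_⟩
  ext v
  rw [mem_lineThrough (by simp)]
  simp
  constructor <;> intro h <;> linarith

/-! ### Pair counting -/

theorem sum_pairs (S : Finset (ℝ × ℝ)) (Ls : Finset (Set (ℝ × ℝ))) (hL : ∀ L ∈ Ls, IsLine L) :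
    ∑ L ∈ Ls, rch S L * (rch S L - 1) ≤ S.card ^ 2 := by
  classical
  have h1 : ∑ L ∈ Ls, rch S L * (rch S L - 1)
      = (Ls.biUnion (fun L => (S.filter (fun p => p ∈ L)).offDiag)).card := by
    rw [Finset.card_biUnion]
    · apply Finset.sum_congr rfl
      intro L _
      rw [Finset.offDiag_card, rch, Nat.mul_sub, mul_one]
    · intro L hL1 L' hL2 hne
      refine Finset.disjoint_left.mpr ?_
      rintro ⟨p, q⟩ h h'
      simp only [Finset.mem_offDiag, Finset.mem_filter] at h h'
      exact hne (line_unique (hL L hL1) (hL L' hL2) h.2.2 h.1.2 h.2.1.2 h'.1.2 h'.2.1.2)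
  rw [h1]
  calc _ ≤ (S ×ˢ S).card := by
        apply Finset.card_le_card
        intro x hx
        simp only [Finset.mem_biUnion, Finset.mem_offDiag, Finset.mem_filter] at hx
        obtain ⟨L, _, h⟩ := hx
        exact Finset.mem_product.mpr ⟨h.1.1, h.2.1.1⟩
    _ = _ := by rw [Finset.card_product, sq]

theorem sum_pairs_real (S : Finset (ℝ × ℝ)) (Ls : Finset (Set (ℝ × ℝ)))
    (hL : ∀ L ∈ Ls, IsLine L) :
    ∑ L ∈ Ls, (rch S L : ℝ) * ((rch S L : ℝ) - 1) ≤ (S.card : ℝ) ^ 2 := by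
  have h := sum_pairs S Ls hL
  have h2 : ((∑ L ∈ Ls, rch S L * (rch S L - 1) : ℕ) : ℝ) ≤ (S.card : ℝ) ^ 2 := by
    exact_mod_cast h
  refine le_trans (le_of_eq ?_) h2
  push_cast
  apply Finset.sum_congr rfl
  intro L _
  rcases Nat.eq_zero_or_pos (rch S L) with h0 | h0
  · simp [h0]
  · rw [Nat.cast_sub h0]; simp

theorem incid_base (S : Finset (ℝ × ℝ)) (Ls : Finset (Set (ℝ × ℝ)))
    (hL : ∀ L ∈ Ls, IsLine L) :
    ∑ L ∈ Ls, (rch S L : ℝ) ≤ S.card * √(Ls.card : ℝ) + Ls.card := by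
  have h1 := sum_pairs_real S Ls hL
  set I := ∑ L ∈ Ls, (rch S L : ℝ) with hI
  have h2 : ∑ L ∈ Ls, (rch S L : ℝ) * ((rch S L : ℝ) - 1) = ∑ L ∈ Ls, (rch S L : ℝ) ^ 2 - I := by
    rw [hI, ← Finset.sum_sub_distrib]
    apply Finset.sum_congr rfl
    intros; ring
  have h3 : I ^ 2 ≤ Ls.card * ∑ L ∈ Ls, (rch S L : ℝ) ^ 2 := sq_sum_le_card_mul_sum_sq
  have hm : (0:ℝ) ≤ Ls.card := by positivity
  have hN : (0:ℝ) ≤ S.card := by positivity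
  have hs := Real.sq_sqrt hm
  have hs0 := Real.sqrt_nonneg (Ls.card : ℝ)
  generalize √(Ls.card : ℝ) = w at *
  generalize (Ls.card : ℝ) = m at *
  generalize (S.card : ℝ) = N at *
  have h4 : I ^ 2 ≤ m * (N ^ 2 + I) := h3.trans (mul_le_mul_of_nonneg_left (by linarith) hm)
  by_contra! hc
  have h5 : I * (I - m) ≤ N ^ 2 * m := by linarith
  have h6 : 0 ≤ N * w := by positivity
  have h7 : (N * w) * (N * w) < I * (I - m) := by
    apply mul_lt_mul'' <;> linarith
  have : (N * w) * (N * w) = N ^ 2 * m := by rw [← hs]; ring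
  linarith


/-! ### Medians and quadrants -/

theorem exists_median (X : Finset (ℝ × ℝ)) (hX : X.Nonempty) (v : ℝ × ℝ → ℝ → ℝ)
    (hv : ∀ p, Continuous (v p)) :
    ∃ F : ℝ → ℝ, Continuous F ∧ ∀ s, 2 * (X.filter (fun p => F s < v p s)).card ≤ X.card ∧
      2 * (X.filter (fun p => v p s < F s)).card ≤ X.card := by
  classical
  set k := (X.card + 1) / 2 with hk
  have hc : 0 < X.card := hX.card_pos
  have hk1 : 1 ≤ k := by omega
  have hk2 : k ≤ X.card := by omega
  have hne : (X.powersetCard k).Nonempty := Finset.powersetCard_nonempty.mpr hk2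
  have hneT : ∀ T : {T // T ∈ X.powersetCard k}, T.1.Nonempty := by
    rintro ⟨T, hT⟩
    rw [Finset.mem_powersetCard] at hT
    exact Finset.card_pos.mp (by show 0 < T.card; omega)
  have hne' : (X.powersetCard k).attach.Nonempty := by simpa using hne
  refine ⟨fun s => (X.powersetCard k).attach.sup' hne'
    (fun T => T.1.inf' (hneT T) (fun p => v p s)), ?_, ?_⟩
  · apply Continuous.finset_sup'_apply
    intro T _
    apply Continuous.finset_inf'_apply
    intro p _
    exact hv p
  · intro s
    dsimp only
    constructor
    · by_contra! hcon
      have h1 : k ≤ (X.filter (fun p => (X.powersetCard k).attach.sup' hne'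
        (fun T => T.1.inf' (hneT T) (fun p => v p s)) < v p s)).card := by omega
      obtain ⟨T, hT, hTk⟩ := Finset.exists_subset_card_eq h1
      have hTm : T ∈ X.powersetCard k :=
        Finset.mem_powersetCard.mpr ⟨hT.trans (Finset.filter_subset _ _), hTk⟩
      have h2 := Finset.le_sup' (f := fun T : {T // T ∈ X.powersetCard k} =>
        T.1.inf' (hneT T) (fun p => v p s)) (Finset.mem_attach _ ⟨T, hTm⟩)
      have h3 : (X.powersetCard k).attach.sup' hne'
        (fun T => T.1.inf' (hneT T) (fun p => v p s)) < T.inf' (hneT ⟨T, hTm⟩) (fun p => v p s) := by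
        rw [Finset.lt_inf'_iff]
        intro p hp
        exact (Finset.mem_filter.mp (hT hp)).2
      exact absurd h3 (not_lt.mpr h2)
    · obtain ⟨⟨T, hTm⟩, _, hT⟩ := Finset.exists_mem_eq_sup' hne'
        (fun T : {T // T ∈ X.powersetCard k} => T.1.inf' (hneT T) (fun p => v p s))
      have hTm' := Finset.mem_powersetCard.mp hTm
      have hsub : X.filter (fun p => v p s < (X.powersetCard k).attach.sup' hne'
          (fun T => T.1.inf' (hneT T) (fun p => v p s))) ⊆ X \ T := by
        intro p hp
        rw [Finset.mem_filter, hT] at hp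
        rw [Finset.mem_sdiff]
        refine ⟨hp.1, fun hpT => ?_⟩
        exact absurd hp.2 (not_lt.mpr (Finset.inf'_le _ hpT))
      have := Finset.card_le_card hsub
      rw [Finset.card_sdiff_of_subset hTm'.1, hTm'.2] at this
      omega

theorem eventually_sep (X Z : Finset (ℝ × ℝ)) (h : ∀ p ∈ X, ∀ q ∈ Z, p.1 < q.1) :
    ∃ s : ℝ, ∀ p ∈ X, ∀ q ∈ Z, q.2 - s * q.1 ≤ p.2 - s * p.1 := by
  have : ∀ᶠ s : ℝ in Filter.atTop, ∀ p ∈ X, ∀ q ∈ Z, q.2 - s * q.1 ≤ p.2 - s * p.1 := by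
    rw [Finset.eventually_all]
    intro p hp
    rw [Finset.eventually_all]
    intro q hq
    filter_upwards [Filter.eventually_ge_atTop ((q.2 - p.2) / (q.1 - p.1))] with s hs
    rw [div_le_iff₀ (by linarith [h p hp q hq])] at hs
    linarith
  exact this.exists

theorem eventually_sep' (X Z : Finset (ℝ × ℝ)) (h : ∀ p ∈ X, ∀ q ∈ Z, p.1 < q.1) :
    ∃ s : ℝ, ∀ p ∈ X, ∀ q ∈ Z, p.2 - s * p.1 ≤ q.2 - s * q.1 := by
  have : ∀ᶠ s : ℝ in Filter.atBot, ∀ p ∈ X, ∀ q ∈ Z, p.2 - s * p.1 ≤ q.2 - s * q.1 := by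
    rw [Finset.eventually_all]
    intro p hp
    rw [Finset.eventually_all]
    intro q hq
    filter_upwards [Filter.eventually_le_atBot ((q.2 - p.2) / (q.1 - p.1))] with s hs
    rw [le_div_iff₀ (by linarith [h p hp q hq])] at hs
    linarith
  exact this.exists

theorem median_le {X Z : Finset (ℝ × ℝ)} (hX : X.Nonempty) (hZ : Z.Nonempty)
    (v : ℝ × ℝ → ℝ) (a b : ℝ) (h : ∀ p ∈ X, ∀ q ∈ Z, v p ≤ v q)
    (ha : 2 * (X.filter (fun p => v p < a)).card ≤ X.card)
    (hb : 2 * (Z.filter (fun p => b < v p)).card ≤ Z.card) : a ≤ b := by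
  have hX' := hX.card_pos
  have hZ' := hZ.card_pos
  have h1 : ∃ p ∈ X, a ≤ v p := by
    by_contra! hc
    rw [Finset.filter_true_of_mem hc] at ha
    omega
  have h2 : ∃ q ∈ Z, v q ≤ b := by
    by_contra! hc
    rw [Finset.filter_true_of_mem hc] at hb
    omega
  obtain ⟨p, hp, hp'⟩ := h1
  obtain ⟨q, hq, hq'⟩ := h2
  linarith [h p hp q hq]

theorem ham_sandwich (X Z : Finset (ℝ × ℝ)) (hX : X.Nonempty) (hZ : Z.Nonempty)
    (h : ∀ p ∈ X, ∀ q ∈ Z, p.1 < q.1) : ∃ s b : ℝ,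
      (2 * (X.filter (fun p => b < p.2 - s * p.1)).card ≤ X.card ∧
      2 * (X.filter (fun p => p.2 - s * p.1 < b)).card ≤ X.card) ∧
      (2 * (Z.filter (fun p => b < p.2 - s * p.1)).card ≤ Z.card ∧
      2 * (Z.filter (fun p => p.2 - s * p.1 < b)).card ≤ Z.card) := by
  obtain ⟨F, hF, hF'⟩ := exists_median X hX (fun p s => p.2 - s * p.1) (fun p => by fun_prop)
  obtain ⟨G, hG, hG'⟩ := exists_median Z hZ (fun p s => p.2 - s * p.1) (fun p => by fun_prop)
  obtain ⟨s1, h1⟩ := eventually_sep X Z h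
  obtain ⟨s2, h2⟩ := eventually_sep' X Z h
  have e1 : G s1 ≤ F s1 := median_le hZ hX (fun p => p.2 - s1 * p.1) _ _
    (fun p hp q hq => h1 q hq p hp) (hG' s1).2 (hF' s1).1
  have e2 : F s2 ≤ G s2 := median_le hX hZ (fun p => p.2 - s2 * p.1) _ _
    h2 (hF' s2).2 (hG' s2).1
  obtain ⟨s, hs⟩ : ∃ s, F s = G s := by
    obtain ⟨s, hs⟩ := mem_range_of_exists_le_of_exists_ge (c := (0:ℝ)) (hF.sub hG)
      ⟨s2, by simpa using e2⟩ ⟨s1, by simpa using e1⟩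
    exact ⟨s, by simpa [sub_eq_zero] using hs⟩
  refine ⟨s, F s, hF' s, ?_⟩
  rw [hs]
  exact hG' s

theorem card_tri (X : Finset (ℝ × ℝ)) (v : ℝ × ℝ → ℝ) (b : ℝ) :
    (X.filter (fun p => v p < b)).card + (X.filter (fun p => b < v p)).card +
      (X.filter (fun p => v p = b)).card = X.card := by
  classical
  rw [Finset.card_filter, Finset.card_filter, Finset.card_filter, ← Finset.sum_add_distrib,
    ← Finset.sum_add_distrib, Finset.card_eq_sum_ones]
  apply Finset.sum_congr rfl
  intro p _
  rcases lt_trichotomy (v p) b with h | h | h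
  · simp [h, h.ne, h.le]
  · simp [h]
  · simp [h, h.ne', h.le]

theorem rch_mono {S T : Finset (ℝ × ℝ)} (h : S ⊆ T) (L : Set (ℝ × ℝ)) : rch S L ≤ rch T L := by
  classical
  exact Finset.card_le_card (Finset.filter_subset_filter _ h)

/-- Four-part partition: every line misses one of the four large parts. -/
theorem quadrants (S : Finset (ℝ × ℝ)) (hS : S.Nonempty)
    (hr : ∀ L, IsLine L → 16 * rch S L ≤ S.card) :
    ∃ A B C D : Finset (ℝ × ℝ), A ⊆ S ∧ B ⊆ S ∧ C ⊆ S ∧ D ⊆ S ∧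
      Disjoint A B ∧ Disjoint A C ∧ Disjoint A D ∧ Disjoint B C ∧ Disjoint B D ∧ Disjoint C D ∧
      S.card ≤ 16 * A.card ∧ S.card ≤ 16 * B.card ∧ S.card ≤ 16 * C.card ∧
      S.card ≤ 16 * D.card ∧
      ∀ L, IsLine L → rch A L = 0 ∨ rch B L = 0 ∨ rch C L = 0 ∨ rch D L = 0 := by
  classical
  have hS0 := hS.card_pos
  obtain ⟨F, _, hF⟩ := exists_median S hS (fun p _ => p.1) (fun p => by fun_prop)
  obtain ⟨m1, m2⟩ := hF 0
  generalize F 0 = m at *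
  have m3 := card_tri S (fun p => p.1) m
  have m4 : 16 * (S.filter (fun p => p.1 = m)).card ≤ S.card := by
    refine le_trans (le_of_eq ?_) (hr _ (isLine_vert m))
    unfold rch; congr
  set X := S.filter (fun p => p.1 < m) with hX
  set Z := S.filter (fun p => m < p.1) with hZ
  have hXS : X ⊆ S := Finset.filter_subset _ _
  have hZS : Z ⊆ S := Finset.filter_subset _ _
  have hXm : ∀ p ∈ X, p.1 < m := fun p hp => (Finset.mem_filter.mp hp).2
  have hZm : ∀ p ∈ Z, m < p.1 := fun p hp => (Finset.mem_filter.mp hp).2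
  obtain ⟨s, b, ⟨x1, x2⟩, ⟨z1, z2⟩⟩ := ham_sandwich X Z (Finset.card_pos.mp (by omega))
    (Finset.card_pos.mp (by omega)) (fun p hp q hq => (hXm p hp).trans (hZm q hq))
  have x3 := card_tri X (fun p => p.2 - s * p.1) b
  have z3 := card_tri Z (fun p => p.2 - s * p.1) b
  have x4 : 16 * (X.filter (fun p => p.2 - s * p.1 = b)).card ≤ S.card := by
    refine le_trans ?_ (hr _ (isLine_slope s b))
    refine le_trans (le_of_eq ?_) (Nat.mul_le_mul_left 16 (rch_mono hXS _))
    unfold rch; congr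
  have z4 : 16 * (Z.filter (fun p => p.2 - s * p.1 = b)).card ≤ S.card := by
    refine le_trans ?_ (hr _ (isLine_slope s b))
    refine le_trans (le_of_eq ?_) (Nat.mul_le_mul_left 16 (rch_mono hZS _))
    unfold rch; congr
  refine ⟨X.filter (fun p => b < p.2 - s * p.1), X.filter (fun p => p.2 - s * p.1 < b),
    Z.filter (fun p => b < p.2 - s * p.1), Z.filter (fun p => p.2 - s * p.1 < b),
    (Finset.filter_subset _ _).trans hXS, (Finset.filter_subset _ _).trans hXS,
    (Finset.filter_subset _ _).trans hZS, (Finset.filter_subset _ _).trans hZS,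
    ?_, ?_, ?_, ?_, ?_, ?_, by omega, by omega, by omega, by omega, ?_⟩
  any_goals
    rw [Finset.disjoint_left]
    intro p hp hp'
    rw [Finset.mem_filter] at hp hp'
    first
    | linarith [hp.2, hp'.2]
    | linarith [hXm p hp.1, hZm p hp'.1]
  intro L hL
  by_contra! hc
  obtain ⟨hA, hB, hC, hD⟩ := hc
  have ex : ∀ T : Finset (ℝ × ℝ), rch T L ≠ 0 → ∃ p ∈ T, p ∈ L := by
    intro T hT
    obtain ⟨p, hp⟩ := Finset.card_ne_zero.mp hT
    exact ⟨p, Finset.mem_filter.mp hp⟩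
  obtain ⟨p1, h1, l1⟩ := ex _ hA
  obtain ⟨p2, h2, l2⟩ := ex _ hB
  obtain ⟨p3, h3, l3⟩ := ex _ hC
  obtain ⟨p4, h4, l4⟩ := ex _ hD
  rw [Finset.mem_filter] at h1 h2 h3 h4
  have c1 := hXm _ h1.1
  have c2 := hXm _ h2.1
  have c3 := hZm _ h3.1
  have c4 := hZm _ h4.1
  obtain ⟨α, β, γ, hab, hE⟩ := hL.eqn
  rw [hE] at l1 l2 l3 l4
  have d1 := h1.2
  have d2 := h2.2
  have d3 := h3.2
  have d4 := h4.2
  by_cases hβ : β = 0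
  · have hα : α ≠ 0 := by tauto
    subst hβ
    have : α * (p3.1 - p1.1) = 0 := by linarith
    have := (mul_eq_zero.mp this).resolve_left hα
    linarith
  · -- along the line, `y - s x - b = t x + u`
    obtain ⟨t, u, ht⟩ : ∃ t u : ℝ, ∀ p : ℝ × ℝ, α * p.1 + β * p.2 = γ →
        p.2 - s * p.1 = t * p.1 + u := by
      refine ⟨-α / β - s, γ / β, fun p hp => ?_⟩
      field_simp
      linarith
    rw [ht _ l1] at d1
    rw [ht _ l2] at d2
    rw [ht _ l3] at d3
    rw [ht _ l4] at d4
    rcases le_total 0 t with h0 | h0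
    · have : t * p1.1 ≤ t * p4.1 := mul_le_mul_of_nonneg_left (by linarith) h0
      linarith
    · have : t * p3.1 ≤ t * p2.1 := mul_le_mul_of_nonpos_left (by linarith) h0
      linarith


/-! ### The incidence bound -/

theorem rch_le_card (S : Finset (ℝ × ℝ)) (L : Set (ℝ × ℝ)) : rch S L ≤ S.card := by
  classical
  exact Finset.card_filter_le _ _

theorem rch_union {S T : Finset (ℝ × ℝ)} [DecidableEq (ℝ × ℝ)] (h : Disjoint S T)
    (L : Set (ℝ × ℝ)) : rch (S ∪ T) L = rch S L + rch T L := by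
  classical
  unfold rch
  rw [Finset.filter_union, Finset.card_union_of_disjoint]
  exact Finset.disjoint_filter_filter h

theorem rch_sdiff {S T : Finset (ℝ × ℝ)} [DecidableEq (ℝ × ℝ)] (h : T ⊆ S)
    (L : Set (ℝ × ℝ)) : rch S L = rch (S \ T) L + rch T L := by
  conv_lhs => rw [← Finset.sdiff_union_of_subset h]
  exact rch_union Finset.sdiff_disjoint L

open Classical in
/-- The lines of `Ls` meeting `S`. -/
def hit (Ls : Finset (Set (ℝ × ℝ))) (S : Finset (ℝ × ℝ)) : Finset (Set (ℝ × ℝ)) :=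
  Ls.filter (fun L => rch S L ≠ 0)

theorem sum_hit (Ls : Finset (Set (ℝ × ℝ))) (S : Finset (ℝ × ℝ)) :
    ∑ L ∈ Ls, (rch S L : ℝ) = ∑ L ∈ hit Ls S, (rch S L : ℝ) := by
  classical
  symm
  apply Finset.sum_subset (Finset.filter_subset _ _)
  intro L hL hL'
  simp only [hit, Finset.mem_filter, not_and, not_not] at hL'
  exact_mod_cast hL' hL

theorem hit_card_le (Ls : Finset (Set (ℝ × ℝ))) (S : Finset (ℝ × ℝ)) :
    ((hit Ls S).card : ℝ) ≤ Ls.card := by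
  classical
  exact_mod_cast Finset.card_filter_le _ _

theorem hit_four (Ls : Finset (Set (ℝ × ℝ))) (A B C D : Finset (ℝ × ℝ))
    (h : ∀ L ∈ Ls, rch A L = 0 ∨ rch B L = 0 ∨ rch C L = 0 ∨ rch D L = 0) :
    ((hit Ls A).card : ℝ) + (hit Ls B).card + (hit Ls C).card + (hit Ls D).card
      ≤ 3 * Ls.card := by
  classical
  have : (hit Ls A).card + (hit Ls B).card + (hit Ls C).card + (hit Ls D).card
      ≤ 3 * Ls.card := by
    unfold hit
    rw [Finset.card_filter, Finset.card_filter, Finset.card_filter, Finset.card_filter,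
      ← Finset.sum_add_distrib, ← Finset.sum_add_distrib, ← Finset.sum_add_distrib,
      Finset.card_eq_sum_ones, Finset.mul_sum]
    apply Finset.sum_le_sum
    intro L hL
    have := h L hL
    split_ifs <;> simp_all
  exact_mod_cast this

theorem sqrt_gain (m a b c d N A B C D R : ℝ) (hm : 0 ≤ m)
    (ha : 0 ≤ a) (hb : 0 ≤ b) (hc : 0 ≤ c) (hd : 0 ≤ d)
    (ha' : a ≤ m) (hb' : b ≤ m) (hc' : c ≤ m) (hd' : d ≤ m) (hs : a + b + c + d ≤ 3 * m)
    (hA : N ≤ 16 * A) (hB : N ≤ 16 * B) (hC : N ≤ 16 * C) (hD : N ≤ 16 * D) (hN : 0 ≤ N)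
    (hsum : A + B + C + D + R = N) :
    A * √a + B * √b + C * √c + D * √d + R * √m ≤ 31 / 32 * N * √m := by
  have key : ∀ x : ℝ, 0 ≤ x → x ≤ m → ∀ X : ℝ, N ≤ 16 * X →
      N / 16 * (√m - √x) ≤ X * (√m - √x) := by
    intro x _ hx X hX
    apply mul_le_mul_of_nonneg_right (by linarith)
    linarith [Real.sqrt_le_sqrt hx]
  have k1 := key a ha ha' A hA
  have k2 := key b hb hb' B hB
  have k3 := key c hc hc' C hC
  have k4 := key d hd hd' D hD
  have main : √m / 2 ≤ (√m - √a) + (√m - √b) + (√m - √c) + (√m - √d) := by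
    rcases hm.eq_or_lt with h0 | h0
    · have ea : a = 0 := by linarith
      have eb : b = 0 := by linarith
      have ec : c = 0 := by linarith
      have ed : d = 0 := by linarith
      simp [← h0, ea, eb, ec, ed]
    · have hp : 0 < √m := Real.sqrt_pos.mpr h0
      have g : ∀ x : ℝ, 0 ≤ x → √m * √x ≤ (m + x) / 2 := by
        intro x hx
        nlinarith [sq_nonneg (√m - √x), Real.sq_sqrt hm, Real.sq_sqrt hx]
      have g1 := g a ha
      have g2 := g b hb
      have g3 := g c hc
      have g4 := g d hd
      have hsq := Real.mul_self_sqrt hm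
      refine le_of_mul_le_mul_left ?_ hp
      have : √m * (√m - √a + (√m - √b) + (√m - √c) + (√m - √d))
        = 4 * (√m * √m) - √m * √a - √m * √b - √m * √c - √m * √d := by ring
      rw [this, hsq]
      have : √m * (√m / 2) = m / 2 := by rw [← mul_div_assoc, hsq]
      rw [this]
      linarith
  have main2 : N / 16 * (√m / 2) ≤
      N / 16 * ((√m - √a) + (√m - √b) + (√m - √c) + (√m - √d)) :=
    mul_le_mul_of_nonneg_left main (by linarith)
  have : R = N - A - B - C - D := by linarith
  subst this
  nlinarith

theorem incid (j : ℕ) : ∀ (S : Finset (ℝ × ℝ)) (Ls : Finset (Set (ℝ × ℝ))),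
    (∀ L ∈ Ls, IsLine L) →
    ∑ L ∈ Ls, (rch S L : ℝ) ≤
      (31 / 32 : ℝ) ^ j * (S.card * √(Ls.card : ℝ)) + 4 ^ j * Ls.card + S.card := by
  classical
  induction j with
  | zero =>
    intro S Ls hL
    have := incid_base S Ls hL
    have h0 : (0:ℝ) ≤ S.card := by positivity
    simp only [pow_zero, one_mul]
    linarith
  | succ j ih =>
    intro S Ls hL
    have hρ : (0:ℝ) ≤ (31 / 32 : ℝ) ^ j := by positivity
    have h4 : (1:ℝ) ≤ 4 ^ j := one_le_pow₀ (by norm_num)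
    have hm : (0:ℝ) ≤ Ls.card := by positivity
    have hw := Real.sqrt_nonneg (Ls.card : ℝ)
    rcases S.eq_empty_or_nonempty with rfl | hS
    · simp [rch]
    by_cases hr : ∀ L, IsLine L → 16 * rch S L ≤ S.card
    · obtain ⟨A, B, C, D, hA, hB, hC, hD, dAB, dAC, dAD, dBC, dBD, dCD, cA, cB, cC, cD, hmiss⟩ :=
        quadrants S hS hr
      set R := S \ (A ∪ B ∪ C ∪ D) with hR
      have hsub : A ∪ B ∪ C ∪ D ⊆ S := by
        simp only [Finset.union_subset_iff]; exact ⟨⟨⟨hA, hB⟩, hC⟩, hD⟩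
      have d1 : Disjoint (A ∪ B) C := Finset.disjoint_union_left.mpr ⟨dAC, dBC⟩
      have d2 : Disjoint (A ∪ B ∪ C) D :=
        Finset.disjoint_union_left.mpr ⟨Finset.disjoint_union_left.mpr ⟨dAD, dBD⟩, dCD⟩
      have hcard : (A.card : ℝ) + B.card + C.card + D.card + R.card = S.card := by
        have h1 := Finset.card_sdiff_add_card_eq_card hsub
        rw [Finset.card_union_of_disjoint d2, Finset.card_union_of_disjoint d1,
          Finset.card_union_of_disjoint dAB, ← hR] at h1
        rw [← h1]; push_cast; ring
      have hI : ∑ L ∈ Ls, (rch S L : ℝ) = ∑ L ∈ Ls, (rch A L : ℝ) + ∑ L ∈ Ls, (rch B L : ℝ) +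
          ∑ L ∈ Ls, (rch C L : ℝ) + ∑ L ∈ Ls, (rch D L : ℝ) + ∑ L ∈ Ls, (rch R L : ℝ) := by
        simp only [← Finset.sum_add_distrib]
        apply Finset.sum_congr rfl
        intro L _
        rw [rch_sdiff hsub, rch_union d2, rch_union d1, rch_union dAB]
        push_cast; ring
      have hh : ∀ T : Finset (ℝ × ℝ), ∀ L ∈ hit Ls T, IsLine L :=
        fun T L h => hL L (Finset.mem_filter.mp h).1
      rw [hI, sum_hit Ls A, sum_hit Ls B, sum_hit Ls C, sum_hit Ls D]
      have iA := ih A _ (hh A)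
      have iB := ih B _ (hh B)
      have iC := ih C _ (hh C)
      have iD := ih D _ (hh D)
      have iR := ih R _ hL
      have four := hit_four Ls A B C D (fun L h => hmiss L (hL L h))
      have gain := sqrt_gain (Ls.card) (hit Ls A).card (hit Ls B).card (hit Ls C).card
        (hit Ls D).card S.card A.card B.card C.card D.card R.card hm (by positivity) (by positivity)
        (by positivity) (by positivity) (hit_card_le _ _) (hit_card_le _ _) (hit_card_le _ _)
        (hit_card_le _ _) four (by exact_mod_cast cA) (by exact_mod_cast cB)
        (by exact_mod_cast cC) (by exact_mod_cast cD) (by positivity) hcard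
      have gain2 := mul_le_mul_of_nonneg_left gain hρ
      have four2 := mul_le_mul_of_nonneg_left four (by linarith : (0:ℝ) ≤ 4 ^ j)
      rw [pow_succ, pow_succ]
      linarith
    · push Not at hr
      obtain ⟨L0, hL0, hr⟩ := hr
      set A := S.filter (fun p => p ∈ L0) with hA
      have hAS : A ⊆ S := Finset.filter_subset _ _
      have hAc : S.card < 16 * A.card := hr
      have hcard : ((S \ A).card : ℝ) + A.card = S.card := by
        exact_mod_cast Finset.card_sdiff_add_card_eq_card hAS
      have hI : ∑ L ∈ Ls, (rch S L : ℝ) =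
          ∑ L ∈ Ls, (rch (S \ A) L : ℝ) + ∑ L ∈ Ls, (rch A L : ℝ) := by
        rw [← Finset.sum_add_distrib]
        apply Finset.sum_congr rfl
        intro L _
        rw [rch_sdiff hAS]; push_cast; rfl
      have hIA : ∑ L ∈ Ls, (rch A L : ℝ) ≤ Ls.card + A.card := by
        have e : ∀ L ∈ Ls, (rch A L : ℝ) ≤ 1 + (if L = L0 then (A.card : ℝ) else 0) := by
          intro L h
          split_ifs with hLL
          · have : (rch A L : ℝ) ≤ A.card := by exact_mod_cast rch_le_card A L
            linarith
          · rw [add_zero]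
            have : rch A L ≤ 1 := by
              unfold rch
              rw [Finset.card_le_one]
              intro p hp q hq
              by_contra hpq
              simp only [hA, Finset.mem_filter] at hp hq
              exact hLL (line_unique (hL L h) hL0 hpq hp.2 hq.2 hp.1.2 hq.1.2)
            exact_mod_cast this
        refine (Finset.sum_le_sum e).trans ?_
        rw [Finset.sum_add_distrib, Finset.sum_ite_eq']
        have : (0:ℝ) ≤ A.card := by positivity
        split_ifs <;> simp
      have i1 := ih (S \ A) Ls hL
      have c1 : ((S \ A).card : ℝ) ≤ 31 / 32 * S.card := by
        have : (S.card : ℝ) < 16 * A.card := by exact_mod_cast hAc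
        have : (0:ℝ) ≤ S.card := by positivity
        linarith
      have c2 := mul_le_mul_of_nonneg_left (mul_le_mul_of_nonneg_right c1 hw) hρ
      have c3 : 1 * (Ls.card : ℝ) ≤ 4 ^ j * Ls.card := mul_le_mul_of_nonneg_right h4 hm
      rw [hI, pow_succ, pow_succ]
      linarith

/-- Rich lines bound. -/
theorem rich_lines (j : ℕ) (S : Finset (ℝ × ℝ)) (Ls : Finset (Set (ℝ × ℝ)))
    (hL : ∀ L ∈ Ls, IsLine L) (h1 : ∀ L ∈ Ls, 2 * 4 ^ j ≤ rch S L)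
    (h2 : ∀ L ∈ Ls, rch S L ≤ 8 * 4 ^ j) :
    ∑ L ∈ Ls, (rch S L : ℝ) ^ 2 ≤
      256 * (31 / 32 : ℝ) ^ j * (S.card : ℝ) ^ 2 + 128 * 4 ^ j * S.card := by
  have hi := incid j S Ls hL
  have hlow : (Ls.card : ℝ) * (2 * 4 ^ j) ≤ ∑ L ∈ Ls, (rch S L : ℝ) := by
    rw [← nsmul_eq_mul]
    apply Finset.card_nsmul_le_sum
    intro L h
    exact_mod_cast h1 L h
  have hup : ∑ L ∈ Ls, (rch S L : ℝ) ^ 2 ≤ (Ls.card : ℝ) * (8 * 4 ^ j) ^ 2 := by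
    rw [← nsmul_eq_mul]
    apply Finset.sum_le_card_nsmul
    intro L h
    have : (rch S L : ℝ) ≤ 8 * 4 ^ j := by exact_mod_cast h2 L h
    gcongr
  refine hup.trans ?_
  have hρ : (0:ℝ) ≤ (31 / 32 : ℝ) ^ j := by positivity
  have hρ1 : (31 / 32 : ℝ) ^ j ≤ 1 := pow_le_one₀ (by norm_num) (by norm_num)
  have hf : (0:ℝ) < 4 ^ j := by positivity
  have ht : (0:ℝ) ≤ Ls.card := by positivity
  have hw := Real.sqrt_nonneg (Ls.card : ℝ)
  have hs := Real.sq_sqrt ht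
  have hN : (0:ℝ) ≤ S.card := by positivity
  generalize √(Ls.card : ℝ) = w at *
  generalize (Ls.card : ℝ) = t at *
  generalize (S.card : ℝ) = N at *
  generalize (31 / 32 : ℝ) ^ j = ρ at *
  generalize (4 : ℝ) ^ j = f at *
  have e1 : f * t ≤ ρ * N * w + N := by linarith
  have e2 : f * (f * t) ≤ f * (ρ * N * w + N) := mul_le_mul_of_nonneg_left e1 hf.le
  -- `(f w)^2 ≤ ρ N (f w) + f N`
  have e3 : (f * w) ^ 2 ≤ ρ * N * (f * w) + f * N := by
    have : (f * w) ^ 2 = f * (f * t) := by rw [← hs]; ring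
    rw [this]; linarith
  have e4 : (f * w) ^ 2 ≤ (ρ * N) ^ 2 + 2 * (f * N) := by
    nlinarith [sq_nonneg (f * w - ρ * N)]
  have e5 : (ρ * N) ^ 2 ≤ ρ * N ^ 2 := by
    have : ρ * ρ ≤ ρ * 1 := mul_le_mul_of_nonneg_left hρ1 hρ
    have := mul_le_mul_of_nonneg_right this (sq_nonneg N)
    linarith
  have e6 : t * (8 * f) ^ 2 = 64 * (f * w) ^ 2 := by rw [← hs]; ring
  have : 0 ≤ ρ * N ^ 2 := by positivity
  rw [e6]
  linarith


/-! ### Assembly -/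

theorem medium_sum (J M : ℕ) (S : Finset (ℝ × ℝ)) (Ls : Finset (Set (ℝ × ℝ)))
    (hL : ∀ L ∈ Ls, IsLine L) (h2 : ∀ L ∈ Ls, 2 ≤ rch S L)
    (hJ : ∀ L ∈ Ls, J ≤ Nat.log 4 (rch S L / 2)) (hM : ∀ L ∈ Ls, Nat.log 4 (rch S L / 2) < M) :
    ∑ L ∈ Ls, (rch S L : ℝ) ^ 2 ≤
      8192 * (31 / 32 : ℝ) ^ J * (S.card : ℝ) ^ 2 + 128 * (4 ^ M - 1) * S.card := by
  classical
  have hmap : ∀ L ∈ Ls, Nat.log 4 (rch S L / 2) ∈ Finset.Ico J M :=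
    fun L h => Finset.mem_Ico.mpr ⟨hJ L h, hM L h⟩
  rw [← Finset.sum_fiberwise_of_maps_to hmap]
  have step : ∀ j ∈ Finset.Ico J M,
      ∑ L ∈ Ls.filter (fun L => Nat.log 4 (rch S L / 2) = j), (rch S L : ℝ) ^ 2 ≤
      256 * (31 / 32 : ℝ) ^ j * (S.card : ℝ) ^ 2 + 128 * 4 ^ j * S.card := by
    intro j _
    apply rich_lines
    · intro L h
      exact hL L (Finset.mem_filter.mp h).1
    · intro L h
      rw [Finset.mem_filter] at h
      have h3 := h2 L h.1
      have h4 := Nat.pow_log_le_self 4 (x := rch S L / 2) (by omega)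
      rw [h.2] at h4
      omega
    · intro L h
      rw [Finset.mem_filter] at h
      have h4 := Nat.lt_pow_succ_log_self (b := 4) (by norm_num) (rch S L / 2)
      rw [h.2, pow_succ] at h4
      omega
  refine (Finset.sum_le_sum step).trans ?_
  rw [Finset.sum_add_distrib, ← Finset.sum_mul, ← Finset.sum_mul, ← Finset.mul_sum,
    ← Finset.mul_sum]
  have g1 : ∑ j ∈ Finset.Ico J M, (31 / 32 : ℝ) ^ j ≤ 32 * (31 / 32 : ℝ) ^ J := by
    have := geom_sum_Ico_le_of_lt_one (x := (31 / 32 : ℝ)) (m := J) (n := M)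
      (by norm_num) (by norm_num)
    refine this.trans (le_of_eq ?_)
    norm_num
    ring
  have g2 : ∑ j ∈ Finset.Ico J M, (4 : ℝ) ^ j ≤ 4 ^ M - 1 := by
    have h1 : ∑ j ∈ Finset.Ico J M, (4 : ℝ) ^ j ≤ ∑ j ∈ Finset.range M, (4 : ℝ) ^ j := by
      apply Finset.sum_le_sum_of_subset_of_nonneg
      · intro j hj
        rw [Finset.mem_Ico] at hj
        exact Finset.mem_range.mpr hj.2
      · intros; positivity
    have h2 := geom_sum_eq (x := (4:ℝ)) (by norm_num) M
    have h3 : (1:ℝ) ≤ 4 ^ M := one_le_pow₀ (by norm_num)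
    rw [h2] at h1
    linarith
  have g1' := mul_le_mul_of_nonneg_right g1 (by positivity : (0:ℝ) ≤ (S.card : ℝ) ^ 2)
  have g2' := mul_le_mul_of_nonneg_right g2 (by positivity : (0:ℝ) ≤ (S.card : ℝ))
  linarith

theorem bichrom_eq [DecidableEq (Set (ℝ × ℝ))] (P Q : Finset (ℝ × ℝ)) (h : Disjoint P Q) :
    BichromLines P Q = ((P ×ˢ Q).image (fun x => lineThrough x.1 x.2) : Finset _) := by
  ext L
  simp only [BichromLines, Set.mem_ofPred_eq, Finset.coe_image, Set.mem_image, Finset.mem_coe,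
    Finset.mem_product]
  constructor
  · rintro ⟨hL, ⟨p, hp, hpL⟩, ⟨q, hq, hqL⟩⟩
    have hpq : p ≠ q := fun e => Finset.disjoint_left.mp h hp (e ▸ hq)
    exact ⟨(p, q), ⟨hp, hq⟩, (eq_lineThrough hL hpq hpL hqL).symm⟩
  · rintro ⟨⟨p, q⟩, ⟨hp, hq⟩, rfl⟩
    have hpq : p ≠ q := fun e => Finset.disjoint_left.mp h hp (e ▸ hq)
    exact ⟨⟨p, q, hpq, rfl⟩, ⟨p, hp, left_mem_lineThrough p q⟩, ⟨q, hq, right_mem_lineThrough p q⟩⟩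

theorem main_bound (J : ℕ) (hJ : 8192 * (31 / 32 : ℝ) ^ J ≤ 1 / 32)
    (P Q : Finset (ℝ × ℝ)) (n : ℕ) (hd : Disjoint P Q) (hP : P.card = n) (hQ : Q.card = n) :
    (1 / (4 * (2 * 4 ^ J) ^ 2) * (n : ℝ) ^ 2 ≤ ((BichromLines P Q).ncard : ℝ) ∨
        ∃ L : Set (ℝ × ℝ), IsLine L ∧
          1 / 131072 * (n : ℝ) ≤ ((((P : Set (ℝ × ℝ)) ∩ L).ncard : ℝ)) ∧
          1 / 131072 * (n : ℝ) ≤ ((((Q : Set (ℝ × ℝ)) ∩ L).ncard : ℝ))) := by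
  classical
  rcases Nat.eq_zero_or_pos n with hn | hn
  · left
    rw [hn]
    simp
  by_contra! hcon
  obtain ⟨hA, hB⟩ := hcon
  simp only [ncard_eq_rch] at hB
  set BL := (P ×ˢ Q).image (fun x => lineThrough x.1 x.2) with hBL
  have hbe := bichrom_eq P Q hd
  rw [hbe, Set.ncard_coe_finset] at hA
  have hline : ∀ L ∈ BL, IsLine L := by
    intro L h
    have : L ∈ BichromLines P Q := by rw [hbe]; exact h
    exact this.1
  set S := P ∪ Q with hS
  have hrS : ∀ L, rch S L = rch P L + rch Q L := fun L => rch_union hd L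
  have hScard : (S.card : ℝ) = 2 * n := by
    rw [hS, Finset.card_union_of_disjoint hd, hP, hQ]; push_cast; ring
  have hpos : ∀ L ∈ BL, 2 ≤ rch S L := by
    intro L h
    have : L ∈ BichromLines P Q := by rw [hbe]; exact h
    obtain ⟨_, ⟨p, hp, hpL⟩, ⟨q, hq, hqL⟩⟩ := this
    have h1 : 0 < rch P L := Finset.card_pos.mpr ⟨p, Finset.mem_filter.mpr ⟨hp, hpL⟩⟩
    have h2 : 0 < rch Q L := Finset.card_pos.mpr ⟨q, Finset.mem_filter.mpr ⟨hq, hqL⟩⟩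
    rw [hrS]; omega
  -- total count
  have htot : (n : ℝ) ^ 2 ≤ ∑ L ∈ BL, (rch P L : ℝ) * rch Q L := by
    have : n ^ 2 ≤ ∑ L ∈ BL, rch P L * rch Q L := by
      calc n ^ 2 = (P ×ˢ Q).card := by rw [Finset.card_product, hP, hQ, sq]
        _ ≤ (BL.biUnion (fun L => (P.filter (fun p => p ∈ L)) ×ˢ
              (Q.filter (fun p => p ∈ L)))).card := by
            apply Finset.card_le_card
            rintro ⟨p, q⟩ h
            have h' := Finset.mem_product.mp h
            rw [Finset.mem_biUnion]
            refine ⟨lineThrough p q, Finset.mem_image.mpr ⟨(p, q), h, rfl⟩, ?_⟩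
            simp only [Finset.mem_product, Finset.mem_filter]
            exact ⟨⟨h'.1, left_mem_lineThrough p q⟩, ⟨h'.2, right_mem_lineThrough p q⟩⟩
        _ ≤ _ := by
            refine Finset.card_biUnion_le.trans (le_of_eq ?_)
            apply Finset.sum_congr rfl
            intro L _
            rw [Finset.card_product]; rfl
    exact_mod_cast this
  have hle : ∀ L, (rch P L : ℝ) * rch Q L ≤ (rch S L : ℝ) ^ 2 := by
    intro L
    rw [hrS]; push_cast
    have h1 : (0:ℝ) ≤ rch P L := by positivity
    have h2 : (0:ℝ) ≤ rch Q L := by positivity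
    nlinarith
  set M := Nat.log 4 (S.card / 4096) with hM
  set idx : Set (ℝ × ℝ) → ℕ := fun L => Nat.log 4 (rch S L / 2) with hidx
  set B1 := BL.filter (fun L => idx L < J) with hB1
  set B2 := (BL.filter (fun L => ¬ idx L < J)).filter (fun L => idx L < M) with hB2
  set B3 := (BL.filter (fun L => ¬ idx L < J)).filter (fun L => ¬ idx L < M) with hB3
  have hsplit : ∑ L ∈ BL, (rch P L : ℝ) * rch Q L = ∑ L ∈ B1, (rch P L : ℝ) * rch Q L +
      (∑ L ∈ B2, (rch P L : ℝ) * rch Q L + ∑ L ∈ B3, (rch P L : ℝ) * rch Q L) := by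
    rw [Finset.sum_filter_add_sum_filter_not, Finset.sum_filter_add_sum_filter_not]
  have hnr : (0:ℝ) < n := by exact_mod_cast hn
  have hn2 : (0:ℝ) < (n:ℝ) ^ 2 := by positivity
  -- small lines
  have s1 : ∑ L ∈ B1, (rch P L : ℝ) * rch Q L < (n : ℝ) ^ 2 / 4 := by
    have h1 : ∑ L ∈ B1, (rch P L : ℝ) * rch Q L ≤ (B1.card : ℝ) * (2 * 4 ^ J) ^ 2 := by
      rw [← nsmul_eq_mul]
      apply Finset.sum_le_card_nsmul
      intro L h
      refine (hle L).trans ?_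
      rw [hB1, Finset.mem_filter] at h
      have h3 : rch S L ≤ 2 * 4 ^ J := by
        have := Nat.lt_pow_of_log_lt (b := 4) (by norm_num) h.2
        omega
      have : (rch S L : ℝ) ≤ 2 * 4 ^ J := by exact_mod_cast h3
      gcongr
    have h2 : (B1.card : ℝ) ≤ BL.card := by exact_mod_cast Finset.card_filter_le _ _
    have h3 : (0:ℝ) < (2 * 4 ^ J) ^ 2 := by positivity
    generalize ((2:ℝ) * 4 ^ J) ^ 2 = K at *
    have h4 : (BL.card : ℝ) * K < (1 / (4 * K) * (n : ℝ) ^ 2) * K :=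
      mul_lt_mul_of_pos_right hA h3
    have h5 : (1 / (4 * K) * (n : ℝ) ^ 2) * K = (n : ℝ) ^ 2 / 4 := by field_simp
    have h6 := mul_le_mul_of_nonneg_right h2 h3.le
    linarith
  -- medium lines
  have s2 : ∑ L ∈ B2, (rch P L : ℝ) * rch Q L ≤ (n : ℝ) ^ 2 / 4 := by
    have hm : ∀ L ∈ B2, L ∈ BL ∧ J ≤ idx L ∧ idx L < M := by
      intro L h
      simp only [hB2, Finset.mem_filter, not_lt] at h
      exact ⟨h.1.1, h.1.2, h.2⟩
    have h1 := medium_sum J M S B2 (fun L h => hline L (hm L h).1) (fun L h => hpos L (hm L h).1)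
      (fun L h => (hm L h).2.1) (fun L h => (hm L h).2.2)
    have h2 : (4:ℝ) ^ M - 1 ≤ S.card / 4096 := by
      rcases Nat.eq_zero_or_pos (S.card / 4096) with h0 | h0
      · rw [hM, h0]
        simp
        positivity
      · have h3 := Nat.pow_log_le_self 4 (x := S.card / 4096) (by omega)
        rw [← hM] at h3
        have h4 : 4 ^ M * 4096 ≤ S.card := by omega
        have h5 : (4:ℝ) ^ M * 4096 ≤ S.card := by exact_mod_cast h4
        linarith
    have h3 := mul_le_mul_of_nonneg_right h2 (by positivity : (0:ℝ) ≤ S.card)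
    have h4 := mul_le_mul_of_nonneg_right hJ (by positivity : (0:ℝ) ≤ (S.card : ℝ) ^ 2)
    refine (Finset.sum_le_sum (fun L _ => hle L)).trans (h1.trans ?_)
    rw [hScard] at *
    nlinarith
  -- large lines
  have s3 : ∑ L ∈ B3, (rch P L : ℝ) * rch Q L ≤ (n : ℝ) ^ 2 / 2 := by
    have hm : ∀ L ∈ B3, L ∈ BL ∧ M ≤ idx L := by
      intro L h
      simp only [hB3, Finset.mem_filter, not_lt] at h
      exact ⟨h.1.1, h.2⟩
    have h1 := sum_pairs_real S B3 (fun L h => hline L (hm L h).1)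
    have h2 : ∀ L ∈ B3, (rch P L : ℝ) * rch Q L * 16 ≤
        (rch S L : ℝ) * ((rch S L : ℝ) - 1) := by
      intro L h
      have hp2 := hpos L (hm L h).1
      have hbig : S.card ≤ 8192 * rch S L := by
        have e1 := Nat.pow_log_le_self 4 (x := rch S L / 2) (by omega)
        have e2 := Nat.pow_le_pow_right (n := 4) (by norm_num) (hm L h).2
        have e3 := Nat.lt_pow_succ_log_self (b := 4) (by norm_num) (S.card / 4096)
        rw [← hM, pow_succ] at e3
        have e4 : 4 ^ M ≤ rch S L / 2 := e2.trans e1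
        omega
      have hbig' : 2 * (n:ℝ) ≤ 8192 * rch S L := by
        rw [← hScard]; exact_mod_cast hbig
      have hp2' : (2:ℝ) ≤ rch S L := by exact_mod_cast hp2
      have hb := hB L (hline L (hm L h).1)
      have hsum : (rch S L : ℝ) = rch P L + rch Q L := by rw [hrS]; push_cast; rfl
      have p0 : (0:ℝ) ≤ rch P L := by positivity
      have q0 : (0:ℝ) ≤ rch Q L := by positivity
      generalize (rch P L : ℝ) = p at *
      generalize (rch Q L : ℝ) = q at *
      generalize (rch S L : ℝ) = k at *
      have hpq : p * q ≤ 1 / 131072 * (n:ℝ) * k := by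
        by_cases hc : 1 / 131072 * (n:ℝ) ≤ p
        · have := hb hc
          nlinarith
        · push Not at hc
          nlinarith
      nlinarith
    have h3 := (Finset.sum_le_sum h2).trans h1
    rw [← Finset.sum_mul, hScard] at h3
    nlinarith
  linarith

/-- Bichromatic two-extremes lemma: either `(P, Q)` has at least `C · n²` bichromatic
induced lines, or some line contains at least `K₂ · n` points of each color. -/
theorem two_extremes :
    ∃ C K₂ : ℝ, 0 < C ∧ 0 < K₂ ∧ ∀ (P Q : Finset (ℝ × ℝ)) (n : ℕ),
      Disjoint P Q → P.card = n → Q.card = n →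
      (C * (n : ℝ) ^ 2 ≤ ((BichromLines P Q).ncard : ℝ) ∨
        ∃ L : Set (ℝ × ℝ), IsLine L ∧
          K₂ * (n : ℝ) ≤ ((((P : Set (ℝ × ℝ)) ∩ L).ncard : ℝ)) ∧
          K₂ * (n : ℝ) ≤ ((((Q : Set (ℝ × ℝ)) ∩ L).ncard : ℝ))) := by
  obtain ⟨J, hJ⟩ := exists_pow_lt_of_lt_one (show (0:ℝ) < 1 / 32 / 8192 by norm_num)
    (show (31 / 32 : ℝ) < 1 by norm_num)
  have hJ' : 8192 * (31 / 32 : ℝ) ^ J ≤ 1 / 32 := by linarith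
  exact ⟨1 / (4 * (2 * 4 ^ J) ^ 2), 1 / 131072, by positivity, by norm_num,
    fun P Q n hd hP hQ => main_bound J hJ' P Q n hd hP hQ⟩
end
end

section
/- Let ℓ₁ and ℓ₂ be two distinct lines in the Euclidean plane ℝ², let A be a set of m points on ℓ₁, and let B be a set of m points on ℓ₂, with A and B disjoint. Then the set of lines determined by one point of A and one point of B contains at least (m − 1)² distinct lines. -/
open Set

noncomputable section

theorem line_unique_aux {L : Set (ℝ × ℝ)} (hL : IsLine L) {a b : ℝ × ℝ} (hab : a ≠ b)
    (ha : a ∈ L) (hb : b ∈ L) : L = lineThrough a b := by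
  obtain ⟨p, q, hpq, rfl⟩ := hL
  exact congrArg _ (affineSpan_pair_eq_of_mem_of_mem_of_ne ha hb hab).symm

theorem left_mem_aux (a b : ℝ × ℝ) : a ∈ lineThrough a b := left_mem_affineSpan_pair ℝ a b

theorem right_mem_aux (a b : ℝ × ℝ) : b ∈ lineThrough a b := right_mem_affineSpan_pair ℝ a b

open Classical in
theorem card_aux {L M : Set (ℝ × ℝ)} (hL : IsLine L) (hM : IsLine M) (hne : L ≠ M)
    (A : Finset (ℝ × ℝ)) (hA : (A : Set (ℝ × ℝ)) ⊆ L) :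
    A.card - 1 ≤ (A.filter (fun x => x ∉ M)).card := by
  have h1 : (A.filter (fun x => x ∈ M)).card ≤ 1 := by
    rw [Finset.card_le_one]
    intro a ha b hb
    rw [Finset.mem_filter] at ha hb
    by_contra hab
    exact hne ((line_unique_aux hL hab (hA ha.1) (hA hb.1)).trans
      (line_unique_aux hM hab ha.2 hb.2).symm)
  have h2 := Finset.card_filter_add_card_filter_not (s := A) (fun x => x ∈ M)
  omega

/-- Two disjoint sets of `m` points on two distinct lines determine at least
`(m − 1)²` distinct connecting lines. -/
theorem grid_lines (ℓ₁ ℓ₂ : Set (ℝ × ℝ)) (A B : Finset (ℝ × ℝ)) (m : ℕ)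
    (h1 : IsLine ℓ₁) (h2 : IsLine ℓ₂) (hne : ℓ₁ ≠ ℓ₂)
    (hA : (A : Set (ℝ × ℝ)) ⊆ ℓ₁) (hB : (B : Set (ℝ × ℝ)) ⊆ ℓ₂)
    (hAB : Disjoint A B) (hcA : A.card = m) (hcB : B.card = m) :
    (m - 1) ^ 2 ≤ {L : Set (ℝ × ℝ) | ∃ a ∈ A, ∃ b ∈ B, L = lineThrough a b}.ncard := by
  classical
  have cA := card_aux h1 h2 hne A hA
  have cB := card_aux h2 h1 hne.symm B hB
  rw [hcA] at cA
  rw [hcB] at cB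
  set A' := A.filter (fun x => x ∉ ℓ₂) with hA'
  set B' := B.filter (fun x => x ∉ ℓ₁) with hB'
  have hfin : {L : Set (ℝ × ℝ) | ∃ a ∈ A, ∃ b ∈ B, L = lineThrough a b}.Finite := by
    refine ((A ×ˢ B).image (fun p => lineThrough p.1 p.2)).finite_toSet.subset ?_
    rintro L ⟨a, ha, b, hb, rfl⟩
    exact Finset.mem_coe.2 (Finset.mem_image.2 ⟨(a, b), Finset.mk_mem_product ha hb, rfl⟩)
  have hinj : Set.InjOn (fun p : (ℝ × ℝ) × (ℝ × ℝ) => lineThrough p.1 p.2)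
      ((A' ×ˢ B' : Finset _) : Set ((ℝ × ℝ) × (ℝ × ℝ))) := by
    rintro ⟨a, b⟩ hab ⟨a', b'⟩ hab' h
    rw [Finset.mem_coe, Finset.mem_product, hA', hB', Finset.mem_filter, Finset.mem_filter]
      at hab hab'
    obtain ⟨⟨ha, ha2⟩, hb, hb1⟩ := hab
    obtain ⟨⟨ha', ha2'⟩, hb', hb1'⟩ := hab'
    dsimp only at *
    have hne' : a ≠ b := fun e => ha2 (e ▸ hB hb)
    have hL : IsLine (lineThrough a b) := ⟨a, b, hne', rfl⟩
    have e1 : a = a' := by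
      by_contra hc
      have := (line_unique_aux hL hc (left_mem_aux a b) (h ▸ left_mem_aux a' b')).trans
        (line_unique_aux h1 hc (hA ha) (hA ha')).symm
      exact hb1 (this ▸ right_mem_aux a b)
    have e2 : b = b' := by
      by_contra hc
      have := (line_unique_aux hL hc (right_mem_aux a b) (h ▸ right_mem_aux a' b')).trans
        (line_unique_aux h2 hc (hB hb) (hB hb')).symm
      exact ha2 (this ▸ left_mem_aux a b)
    rw [e1, e2]
  have hsub : (((A' ×ˢ B').image (fun p => lineThrough p.1 p.2) : Finset (Set (ℝ × ℝ))) :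
      Set (Set (ℝ × ℝ))) ⊆ {L : Set (ℝ × ℝ) | ∃ a ∈ A, ∃ b ∈ B, L = lineThrough a b} := by
    intro L hL
    obtain ⟨⟨a, b⟩, hab, rfl⟩ := Finset.mem_image.1 (Finset.mem_coe.1 hL)
    rw [Finset.mem_product] at hab
    exact ⟨a, (Finset.mem_filter.1 hab.1).1, b, (Finset.mem_filter.1 hab.2).1, rfl⟩
  have hle := Set.ncard_le_ncard hsub hfin
  rw [Set.ncard_coe_finset, Finset.card_image_of_injOn hinj, Finset.card_product] at hle
  rw [sq]
  exact (Nat.mul_le_mul cA cB).trans hle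
end
end
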